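/- Let W be the Wiener measure on Ω. For ξ > 0 let E(ξ) = {ω ∈ Ω : the local order ord_loc W(ω) exists and equals ξ} and E^crit(ξ) = E(ξ) ∩ Ω^crit. Then: (i) for every ξ ≥ 2, the Hausdorff order ord_H E^crit(ξ) = 1 + ξ/2 (in particular E^crit(ξ) is non-empty), and consequently ord_H E(ξ) ≥ 1 + ξ/2; (ii) for every 0 < ξ < 2, E(ξ) = ∅ (in particular E^crit(ξ) = ∅). -/

import Mathlib

open scoped ENNReal NNReal Topology
open Filter MeasureTheory Metric Set

noncomputable section

namespace Multifractal


/-- The `δ`-level Hausdorff pre-measure `H^h_δ` associated to a gauge `h`. -/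
def hMeasAux {X : Type*} [MetricSpace X] (h : ℝ → ℝ) (δ : ℝ≥0∞) (E : Set X) : ℝ≥0∞ :=
  ⨅ (c : ℕ → X) (r : ℕ → ℝ) (_ : ∀ n, 0 < r n ∧ ENNReal.ofReal (r n) ≤ δ)
    (_ : E ⊆ ⋃ n, Metric.ball (c n) (r n)), ∑' n, ENNReal.ofReal (h (r n))

/-- The `h`-Hausdorff measure. -/
def hMeas {X : Type*} [MetricSpace X] (h : ℝ → ℝ) (E : Set X) : ℝ≥0∞ :=
  ⨆ (δ : ℝ≥0∞) (_ : 0 < δ), hMeasAux h δ E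

/-- `Ω`: continuous paths on `[0,1]` vanishing at `0`, with the uniform metric. -/
abbrev PathSpace : Type := {f : C(unitInterval, ℝ) // f 0 = 0}

instance : MeasurableSpace PathSpace := borel PathSpace
instance : BorelSpace PathSpace := ⟨rfl⟩

/-- `μ` is a centered Gaussian process measure on path space with covariance `K`:
a probability measure under which every finite linear combination of coordinates
is a centered real Gaussian with the variance given by `K`. -/
def IsGaussianProcess (μ : Measure PathSpace) (K : unitInterval → unitInterval → ℝ) : Prop :=
  IsProbabilityMeasure μ ∧
  ∀ (n : ℕ) (t : Fin n → unitInterval) (c : Fin n → ℝ),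
    Measure.map (fun ω : PathSpace => ∑ i, c i * ω.1 (t i)) μ =
      ProbabilityTheory.gaussianReal 0
        (Real.toNNReal (∑ i, ∑ j, c i * c j * K (t i) (t j)))

/-- `W` is the Wiener measure: the coordinate process is centered Gaussian with
covariance `min s t`. -/
def IsWienerMeasure (W : Measure PathSpace) : Prop :=
  IsGaussianProcess W (fun s t => min (s : ℝ) (t : ℝ))

/-- `μ` is the law of fractional Brownian motion with Hurst parameter `H`. -/
def IsFBM (H : ℝ) (μ : Measure PathSpace) : Prop :=
  IsGaussianProcess μ (fun s t =>
    ((s : ℝ) ^ (2*H) + (t : ℝ) ^ (2*H) - |(t : ℝ) - (s : ℝ)| ^ (2*H)) / 2)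

/-- Clamping of a real number into the unit interval. -/
def clampI (t : ℝ) : unitInterval :=
  ⟨min (max t 0) 1, Set.mem_Icc.mpr ⟨le_min (le_max_right _ _) zero_le_one, min_le_right _ _⟩⟩

/-- The grid point `j/n` of the unit interval. -/
def gridPt (n j : ℕ) : unitInterval := clampI ((j : ℝ) / n)

/-- The discrete quadratic variation `Q_n(ω)`. -/
def Qvar (ω : PathSpace) (n : ℕ) : ℝ :=
  Real.sqrt ((1 / (n : ℝ)) *
    ∑ i ∈ Finset.range n, (ω.1 (gridPt n (i+1)) - ω.1 (gridPt n i)) ^ 2)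

/-- Lower Orey exponent `q^-(ω)`. -/
def oreyLower (ω : PathSpace) : EReal :=
  liminf (fun n : ℕ => ((-Real.log (Qvar ω n) / Real.log n : ℝ) : EReal)) atTop

/-- Upper Orey exponent `q^+(ω)`. -/
def oreyUpper (ω : PathSpace) : EReal :=
  limsup (fun n : ℕ => ((-Real.log (Qvar ω n) / Real.log n : ℝ) : EReal)) atTop

/-- The set `C_a` of `a`-Hölder paths. -/
def holderSet (a : ℝ) : Set PathSpace :=
  {ω | ∃ C : ℝ, ∀ x y : unitInterval, |ω.1 x - ω.1 y| ≤ C * |(x : ℝ) - (y : ℝ)| ^ a}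

/-- The set `C_a^- = ⋂_{0<b<a} C_b` of nearly `a`-Hölder paths. -/
def holderMinus (a : ℝ) : Set PathSpace := ⋂ b ∈ Set.Ioo (0:ℝ) a, holderSet b

/-- The set `C_q^crit` of critical `q`-Hölder paths: nearly `q`-Hölder paths whose
Orey exponent exists and equals `q`. -/
def holderCrit (q : ℝ) : Set PathSpace :=
  {ω | ω ∈ holderMinus q ∧ oreyLower ω = (q : EReal) ∧ oreyUpper ω = (q : EReal)}

/-- The set `Ω^crit` of critical Hölder paths. -/
def pathCrit : Set PathSpace := ⋃ q ∈ Set.Ioo (0:ℝ) 1, holderCrit q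

/-- The lower local order of a measure `μ` on path space at `ω`. -/
def lowerLocOrd (μ : Measure PathSpace) (ω : PathSpace) : EReal :=
  liminf (fun ε : ℝ =>
    ((Real.log (-Real.log ((μ (Metric.ball ω ε)).toReal)) / (-Real.log ε) : ℝ) : EReal))
    (𝓝[>] (0:ℝ))

/-- The upper local order of a measure `μ` on path space at `ω`. -/
def upperLocOrd (μ : Measure PathSpace) (ω : PathSpace) : EReal :=
  limsup (fun ε : ℝ =>
    ((Real.log (-Real.log ((μ (Metric.ball ω ε)).toReal)) / (-Real.log ε) : ℝ) : EReal))
    (𝓝[>] (0:ℝ))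

/-- The Hausdorff order of a set of paths: `sup {α > 0 : H^{h_α}(A) = ∞}` where
`h_α(ε) = exp(-ε^{-α})`. -/
def ordH (A : Set PathSpace) : ℝ≥0∞ :=
  ⨆ (α : ℝ) (_ : 0 < α ∧ hMeas (fun ε : ℝ => Real.exp (-(ε ^ (-α)))) A = ∞),
    ENNReal.ofReal α

/-- The level set `E(ξ)` of paths at which the local order of `μ` exists and
equals `ξ`. -/
def levelOrd (μ : Measure PathSpace) (ξ : ℝ) : Set PathSpace :=
  {ω | lowerLocOrd μ ω = (ξ : EReal) ∧ upperLocOrd μ ω = (ξ : EReal)}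

/-- The cylinder `C_n(ω̄, ε)` around `ω̄` of depth `n` and radius `ε`. -/
def cylinder (ωb : PathSpace) (n : ℕ) (ε : ℝ) : Set PathSpace :=
  {ω | ∀ j ∈ Finset.Icc 1 n, |ω.1 (gridPt n j) - ωb.1 (gridPt n j)| ≤ ε}

/-- The affine interpolation `L̄_j` of `ω̄` on `[(j-1)/n, j/n]`, evaluated at `t`. -/
def affInterp (ωb : PathSpace) (n j : ℕ) (t : ℝ) : ℝ :=
  ωb.1 (gridPt n (j-1)) +
    (t - ((j-1 : ℕ) : ℝ) / n) * n * (ωb.1 (gridPt n j) - ωb.1 (gridPt n (j-1)))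

/-- The maximal deviation `Δ_n(ω̄)` of `ω̄` from its chords on the `1/n`-grid. -/
def chordDev (ωb : PathSpace) (n : ℕ) : ℝ :=
  sSup {d : ℝ | ∃ j ∈ Finset.Icc 1 n, ∃ t ∈ Set.Icc (((j-1 : ℕ) : ℝ) / n) ((j : ℝ) / n),
    d = |ωb.1 (clampI t) - affInterp ωb n j t|}


section

open ProbabilityTheory

/-- Covariance of `∑ a, c a * ω (t a)` and `∑ b, c' b * ω (t' b)` under the Wiener measure. -/
def wienerCov {κ κ' : Type*} [Fintype κ] [Fintype κ'] (c : κ → ℝ) (t : κ → unitInterval)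
    (c' : κ' → ℝ) (t' : κ' → unitInterval) : ℝ :=
  ∑ a, ∑ b, c a * c' b * min (t a : ℝ) (t' b : ℝ)

lemma measurable_eval (t : unitInterval) : Measurable fun ω : PathSpace => ω.1 t := by
  have : Continuous fun ω : PathSpace => ω.1 t := by fun_prop
  exact this.measurable

lemma measurable_linComb {κ : Type*} [Fintype κ] (c : κ → ℝ) (t : κ → unitInterval) :
    Measurable fun ω : PathSpace => ∑ a, c a * ω.1 (t a) :=
  Finset.measurable_sum _ fun a _ => (measurable_eval (t a)).const_mul _

lemma map_linComb {W : Measure PathSpace} (hW : IsWienerMeasure W) {κ : Type*} [Fintype κ]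
    (c : κ → ℝ) (t : κ → unitInterval) :
    W.map (fun ω : PathSpace => ∑ a, c a * ω.1 (t a)) =
      gaussianReal 0 (Real.toNNReal (wienerCov c t c t)) := by
  have h := hW.2 (Fintype.card κ) (fun i => t ((Fintype.equivFin κ).symm i))
    (fun i => c ((Fintype.equivFin κ).symm i))
  have e : ∀ f : κ → ℝ, ∑ i, f ((Fintype.equivFin κ).symm i) = ∑ a, f a :=
    fun f => Equiv.sum_comp _ f
  have h1 : (fun ω : PathSpace => ∑ i, c ((Fintype.equivFin κ).symm i) *
      ω.1 (t ((Fintype.equivFin κ).symm i))) = fun ω : PathSpace => ∑ a, c a * ω.1 (t a) :=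
    funext fun ω => e fun a => c a * ω.1 (t a)
  rw [h1] at h
  rw [h, wienerCov]
  congr 2
  rw [← e]
  refine Finset.sum_congr rfl fun i _ => ?_
  exact e fun b => c ((Fintype.equivFin κ).symm i) * c b *
    min (t ((Fintype.equivFin κ).symm i) : ℝ) (t b)

lemma iIndepFun_linComb {W : Measure PathSpace} (hW : IsWienerMeasure W)
    {ι κ : Type*} [Fintype ι] [Fintype κ] (c : ι → κ → ℝ) (t : ι → κ → unitInterval)
    (hnn : ∀ i, 0 ≤ wienerCov (c i) (t i) (c i) (t i))
    (horth : ∀ i i', i ≠ i' → wienerCov (c i) (t i) (c i') (t i') = 0) :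
    iIndepFun (fun i (ω : PathSpace) => ∑ a, c i a * ω.1 (t i a)) W := by
  classical
  have := hW.1
  rw [iIndepFun_iff_charFun_pi fun i => (measurable_linComb (c i) (t i)).aemeasurable]
  intro u
  have hlaw := map_linComb hW (fun p : ι × κ => u p.1 * c p.1 p.2) (fun p => t p.1 p.2)
  have hV : wienerCov (fun p : ι × κ => u p.1 * c p.1 p.2) (fun p => t p.1 p.2)
      (fun p : ι × κ => u p.1 * c p.1 p.2) (fun p => t p.1 p.2) =
      ∑ i, u i ^ 2 * wienerCov (c i) (t i) (c i) (t i) := by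
    have : ∀ i, u i ^ 2 * wienerCov (c i) (t i) (c i) (t i) =
        ∑ i', u i * u i' * wienerCov (c i) (t i) (c i') (t i') := by
      intro i
      rw [Finset.sum_eq_single i]
      · ring
      · intro b _ hb
        rw [horth i b hb.symm, mul_zero]
      · simp
    simp_rw [this, wienerCov, Fintype.sum_prod_type]
    refine Finset.sum_congr rfl fun i _ => ?_
    rw [Finset.sum_comm]
    refine Finset.sum_congr rfl fun i' _ => ?_
    rw [Finset.mul_sum]
    refine Finset.sum_congr rfl fun a _ => ?_
    rw [Finset.mul_sum]
    refine Finset.sum_congr rfl fun b _ => ?_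
    ring
  have hVn : 0 ≤ ∑ i, u i ^ 2 * wienerCov (c i) (t i) (c i) (t i) :=
    Finset.sum_nonneg fun i _ => mul_nonneg (sq_nonneg _) (hnn i)
  have h1 : charFun (W.map fun ω : PathSpace => WithLp.toLp 2 fun i => ∑ a, c i a * ω.1 (t i a)) u
      = charFun (W.map fun ω : PathSpace => ∑ p : ι × κ, (u p.1 * c p.1 p.2) * ω.1 (t p.1 p.2)) 1 := by
    have m1 : Measurable fun ω : PathSpace =>
        (WithLp.toLp 2 fun i => ∑ a, c i a * ω.1 (t i a) : PiLp 2 fun _ : ι => ℝ) := by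
      have : Measurable fun ω : PathSpace => fun i => ∑ a, c i a * ω.1 (t i a) :=
        measurable_pi_lambda _ fun i => measurable_linComb (c i) (t i)
      fun_prop
    have m2 := measurable_linComb (fun p : ι × κ => u p.1 * c p.1 p.2) (fun p => t p.1 p.2)
    rw [charFun_apply, charFun_apply, integral_map m1.aemeasurable (by fun_prop),
      integral_map m2.aemeasurable (by fun_prop)]
    congr 1
    ext ω
    congr 3
    simp only [PiLp.inner_apply, RCLike.inner_apply, conj_trivial, Fintype.sum_prod_type,
      Finset.mul_sum, one_mul]
    simp [mul_assoc]
  rw [h1, hlaw, charFun_gaussianReal, hV]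
  simp_rw [map_linComb hW, charFun_gaussianReal]
  rw [← Complex.exp_sum]
  congr 1
  rw [Real.coe_toNNReal _ hVn]
  push_cast
  simp only [mul_zero, zero_mul, zero_sub, one_pow, mul_one]
  rw [← neg_div, Finset.sum_neg_distrib, neg_div, neg_inj, Finset.sum_div]
  refine Finset.sum_congr rfl fun i _ => ?_
  rw [Real.coe_toNNReal _ (hnn i)]
  ring

lemma hasSubgaussianMGF_gaussianReal (v : ℝ≥0) : HasSubgaussianMGF id v (gaussianReal 0 v) where
  integrable_exp_mul t := integrable_exp_mul_gaussianReal t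
  mgf_le t := by
    rw [mgf_id_gaussianReal]
    simp

/-- Gaussian upper tail. -/
lemma gaussianReal_Ici_le (v : ℝ≥0) {x : ℝ} (hx : 0 ≤ x) :
    (gaussianReal 0 v).real (Ici x) ≤ Real.exp (-x ^ 2 / (2 * v)) :=
  (hasSubgaussianMGF_gaussianReal v).measure_ge_le hx

lemma gaussianReal_Icc_ge_one_sub (v : ℝ≥0) {x : ℝ} (hx : 0 ≤ x) :
    1 - 2 * Real.exp (-x ^ 2 / (2 * v)) ≤ (gaussianReal 0 v).real (Icc (-x) x) := by
  have h1 := gaussianReal_Ici_le v hx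
  have h2 : (gaussianReal 0 v).real (Iic (-x)) ≤ Real.exp (-x ^ 2 / (2 * v)) := by
    have := (hasSubgaussianMGF_gaussianReal v).neg.measure_ge_le hx
    convert this using 3
    ext y
    simp [le_neg]
  have h3 : (gaussianReal 0 v).real univ ≤ (gaussianReal 0 v).real (Icc (-x) x) +
      ((gaussianReal 0 v).real (Ici x) + (gaussianReal 0 v).real (Iic (-x))) := by
    refine (measureReal_mono (?_ : univ ⊆ Icc (-x) x ∪ (Ici x ∪ Iic (-x)))).trans
      ((measureReal_union_le _ _).trans (add_le_add le_rfl (measureReal_union_le _ _)))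
    intro y _
    simp only [mem_union, mem_Icc, mem_Ici, mem_Iic]
    rcases le_total y (-x) with h | h
    · exact Or.inr (Or.inr h)
    · rcases le_total x y with h' | h'
      · exact Or.inr (Or.inl h')
      · exact Or.inl ⟨h, h'⟩
  simp only [probReal_univ] at h3
  linarith

/-- Lower bound for the Gaussian mass of a short interval. -/
lemma gaussianReal_Icc_ge {v : ℝ≥0} (hv : v ≠ 0) (a : ℝ) {e : ℝ} (he : 0 ≤ e) :
    e * ((√(2 * Real.pi * v))⁻¹ * Real.exp (-(a ^ 2 + e ^ 2) / (2 * v))) ≤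
      (gaussianReal 0 v).real (Icc (a - e) (a + e)) := by
  have hvp : (0 : ℝ) < v := by positivity
  obtain ⟨l, hl1, hl2, hl3⟩ : ∃ l, a - e ≤ l ∧ l + e ≤ a + e ∧
      ∀ x ∈ Icc l (l + e), x ^ 2 ≤ a ^ 2 + e ^ 2 := by
    rcases le_total 0 a with h | h
    · refine ⟨a - e, le_rfl, by linarith, fun x hx => ?_⟩
      have := hx.1; have := hx.2
      rcases le_total 0 x with h' | h' <;> nlinarith
    · refine ⟨a, by linarith, by linarith, fun x hx => ?_⟩
      have := hx.1; have := hx.2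
      rcases le_total 0 x with h' | h' <;> nlinarith
  have hsub : Icc l (l + e) ⊆ Icc (a - e) (a + e) := Icc_subset_Icc hl1 hl2
  refine le_trans ?_ (measureReal_mono hsub)
  rw [measureReal_def, gaussianReal_apply_eq_integral _ hv, ENNReal.toReal_ofReal
    (integral_nonneg fun x => gaussianPDFReal_nonneg _ _ _)]
  have h := setIntegral_mono_on (s := Icc l (l + e)) (μ := volume)
    (f := fun _ => (√(2 * Real.pi * v))⁻¹ * Real.exp (-(a ^ 2 + e ^ 2) / (2 * v)))
    (g := gaussianPDFReal 0 v) continuous_const.integrableOn_Icc (integrable_gaussianPDFReal 0 v).integrableOn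
    measurableSet_Icc (by
      intro x hx
      rw [gaussianPDFReal]
      have := hl3 x hx
      gcongr
      simpa using this)
  refine le_trans (le_of_eq ?_) h
  simp [measureReal_def, he]

/-- Upper bound for the Gaussian mass of an interval. -/
lemma gaussianReal_Icc_le {v : ℝ≥0} (hv : v ≠ 0) (a : ℝ) {e : ℝ} (he : 0 ≤ e) :
    (gaussianReal 0 v).real (Icc (a - e) (a + e)) ≤ 2 * e * (√(2 * Real.pi * v))⁻¹ := by
  rw [measureReal_def, gaussianReal_apply_eq_integral _ hv, ENNReal.toReal_ofReal
    (integral_nonneg fun x => gaussianPDFReal_nonneg _ _ _)]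
  have h := setIntegral_mono_on (s := Icc (a - e) (a + e)) (μ := volume)
    (g := fun _ => (√(2 * Real.pi * v))⁻¹)
    (f := gaussianPDFReal 0 v) (integrable_gaussianPDFReal 0 v).integrableOn continuous_const.integrableOn_Icc
    measurableSet_Icc (by
      intro x _
      rw [gaussianPDFReal]
      refine mul_le_of_le_one_right (by positivity) (Real.exp_le_one_iff.2 ?_)
      rw [neg_div]
      exact neg_nonpos.2 (by positivity))
  refine h.trans (le_of_eq ?_)
  have : a + e - (a - e) = 2 * e := by ring
  simp [measureReal_def, he, this]

lemma coe_gridPt {n j : ℕ} (h : j ≤ n) : (gridPt n j : ℝ) = j / n := by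
  have h1 : (j : ℝ) / n ≤ 1 := div_le_one_of_le₀ (by exact_mod_cast h) (by positivity)
  have h0 : (0 : ℝ) ≤ j / n := by positivity
  simp [gridPt, clampI, max_eq_left h0, min_eq_left h1]

/-- The sample points of the Schauder functionals: `none` is the endpoint `1`, and `some (k, j)`
is the dyadic interval `[j/2^k, (j+1)/2^k]` with its midpoint. -/
def schauderPt : Option (ℕ × ℕ) → Fin 3 → unitInterval
  | none => ![1, 1, 1]
  | some (k, j) => ![gridPt (2 ^ k) j, gridPt (2 ^ (k + 1)) (2 * j + 1), gridPt (2 ^ k) (j + 1)]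

/-- The weights of the Schauder functionals. -/
def schauderWt : Option (ℕ × ℕ) → Fin 3 → ℝ
  | none => ![0, 1, 0]
  | some _ => ![-1 / 2, 1, -1 / 2]

/-- Schauder coefficients of a function: its value at `1`, and the deviation from the chord at the
midpoint of a dyadic interval. -/
def schauder (f : unitInterval → ℝ) (i : Option (ℕ × ℕ)) : ℝ :=
  ∑ a, schauderWt i a * f (schauderPt i a)

/-- The variances of the Schauder coefficients under the Wiener measure. -/
def schauderVar : Option (ℕ × ℕ) → ℝ
  | none => 1
  | some (k, _) => 1 / 2 ^ (k + 2)

/-- Indices of dyadic intervals contained in `[0,1]`. -/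
def IsDyadicIndex : Option (ℕ × ℕ) → Prop
  | none => True
  | some (k, j) => j < 2 ^ k

lemma schauder_none (f : unitInterval → ℝ) : schauder f none = f 1 := by
  simp [schauder, schauderWt, schauderPt, Fin.sum_univ_three]

lemma schauder_some (f : unitInterval → ℝ) (k j : ℕ) :
    schauder f (some (k, j)) = f (gridPt (2 ^ (k + 1)) (2 * j + 1)) -
      (f (gridPt (2 ^ k) j) + f (gridPt (2 ^ k) (j + 1))) / 2 := by
  simp [schauder, schauderWt, schauderPt, Fin.sum_univ_three]
  ring

lemma schauder_sub (f g : unitInterval → ℝ) (i : Option (ℕ × ℕ)) :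
    schauder (fun t => f t - g t) i = schauder f i - schauder g i := by
  simp [schauder, mul_sub, Finset.sum_sub_distrib]

/-- `min p ·` is affine on intervals which do not contain `p` in their interior. -/
lemma min_midpoint {p l r : ℝ} (hlr : l ≤ r) (h : p ≤ l ∨ r ≤ p) :
    min p ((l + r) / 2) - (min p l + min p r) / 2 = 0 := by
  rcases h with h | h
  · rw [min_eq_left h, min_eq_left (by linarith), min_eq_left (by linarith)]; ring
  · rw [min_eq_right h, min_eq_right (by linarith), min_eq_right (by linarith)]; ring

/-- The left endpoint, midpoint and right endpoint of a dyadic interval. -/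
def dyadicPt (k j : ℕ) : Fin 3 → ℝ :=
  ![(j : ℝ) / 2 ^ k, ((j : ℝ) / 2 ^ k + (j + 1) / 2 ^ k) / 2, (j + 1 : ℝ) / 2 ^ k]

lemma coe_schauderPt {k j : ℕ} (h : j < 2 ^ k) (a : Fin 3) :
    (schauderPt (some (k, j)) a : ℝ) = dyadicPt k j a := by
  have h2 : 2 * j + 1 ≤ 2 ^ (k + 1) := by rw [pow_succ]; omega
  fin_cases a
  · simp [schauderPt, dyadicPt, coe_gridPt h.le]
  · simp only [schauderPt, dyadicPt, Fin.mk_one, Matrix.cons_val_one, Matrix.cons_val_zero,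
      coe_gridPt h2]
    push_cast
    rw [pow_succ]
    field_simp
    ring
  · simp [schauderPt, dyadicPt, coe_gridPt (Nat.succ_le_of_lt h)]

/-- Second difference of `min p ·` on a dyadic interval. -/
lemma sum_schauderWt_min (p : ℝ) {k j : ℕ} (h : j < 2 ^ k) :
    ∑ a, schauderWt (some (k, j)) a * min p (schauderPt (some (k, j)) a : ℝ) =
      min p (((j : ℝ) / 2 ^ k + (j + 1) / 2 ^ k) / 2) -
        (min p ((j : ℝ) / 2 ^ k) + min p ((j + 1 : ℝ) / 2 ^ k)) / 2 := by
  simp only [coe_schauderPt h]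
  simp [schauderWt, dyadicPt, Fin.sum_univ_three]
  ring

lemma dyadic_left_le_right (k j : ℕ) : (j : ℝ) / 2 ^ k ≤ (j + 1) / 2 ^ k := by gcongr; linarith

lemma dyadicPt_le_or_ge {k j k' j' : ℕ} (h : k < k' ∨ k = k' ∧ j ≠ j') (a : Fin 3) :
    dyadicPt k j a ≤ (j' : ℝ) / 2 ^ k' ∨ (j' + 1 : ℝ) / 2 ^ k' ≤ dyadicPt k j a := by
  rcases h with h | ⟨rfl, h⟩
  · obtain ⟨n, hn⟩ : ∃ n : ℕ, dyadicPt k j a = (n : ℝ) / 2 ^ k' := by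
      obtain ⟨d, rfl⟩ := Nat.exists_eq_add_of_lt h
      fin_cases a
      · refine ⟨2 ^ (d + 1) * j, ?_⟩
        simp [dyadicPt, pow_add]; field_simp
      · refine ⟨2 ^ d * (2 * j + 1), ?_⟩
        simp [dyadicPt, pow_add]; field_simp; ring
      · refine ⟨2 ^ (d + 1) * (j + 1), ?_⟩
        simp [dyadicPt, pow_add]; field_simp
    rw [hn]
    rcases le_or_gt n j' with h' | h'
    · left; gcongr
    · right; gcongr; exact_mod_cast h'
  · have hm : dyadicPt k j a ≤ (j + 1 : ℝ) / 2 ^ k ∧ (j : ℝ) / 2 ^ k ≤ dyadicPt k j a := by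
      have := dyadic_left_le_right k j
      fin_cases a <;> constructor <;> simp [dyadicPt] <;> linarith
    rcases lt_or_gt_of_ne h with h' | h'
    · left
      refine hm.1.trans ?_
      gcongr; exact_mod_cast h'
    · right
      refine le_trans ?_ hm.2
      gcongr; exact_mod_cast h'

lemma wienerCov_eq_zero_of_lt {k j k' j' : ℕ} (hj : j < 2 ^ k) (hj' : j' < 2 ^ k')
    (h : k < k' ∨ k = k' ∧ j ≠ j') :
    wienerCov (schauderWt (some (k, j))) (schauderPt (some (k, j)))
      (schauderWt (some (k', j'))) (schauderPt (some (k', j'))) = 0 := by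
  rw [wienerCov]
  refine Finset.sum_eq_zero fun a _ => ?_
  simp_rw [mul_assoc]
  rw [← Finset.mul_sum, sum_schauderWt_min _ hj', coe_schauderPt hj,
    min_midpoint (dyadic_left_le_right _ _) (dyadicPt_le_or_ge h a), mul_zero]

lemma wienerCov_comm {κ κ' : Type*} [Fintype κ] [Fintype κ'] (c : κ → ℝ) (t : κ → unitInterval)
    (c' : κ' → ℝ) (t' : κ' → unitInterval) : wienerCov c t c' t' = wienerCov c' t' c t := by
  rw [wienerCov, Finset.sum_comm, wienerCov]
  refine Finset.sum_congr rfl fun a _ => Finset.sum_congr rfl fun b _ => ?_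
  rw [min_comm]; ring

lemma wienerCov_none_some {k j : ℕ} (hj : j < 2 ^ k) :
    wienerCov (schauderWt none) (schauderPt none)
      (schauderWt (some (k, j))) (schauderPt (some (k, j))) = 0 := by
  rw [wienerCov]
  refine Finset.sum_eq_zero fun a _ => ?_
  simp_rw [mul_assoc]
  rw [← Finset.mul_sum, sum_schauderWt_min _ hj, min_midpoint (dyadic_left_le_right _ _), mul_zero]
  right
  have : schauderPt none a = 1 := by fin_cases a <;> rfl
  rw [this, Set.Icc.coe_one, div_le_one (by positivity)]
  exact_mod_cast hj

lemma wienerCov_schauder_self {i : Option (ℕ × ℕ)} (hi : IsDyadicIndex i) :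
    wienerCov (schauderWt i) (schauderPt i) (schauderWt i) (schauderPt i) = schauderVar i := by
  rcases i with _ | ⟨k, j⟩
  · simp [wienerCov, schauderWt, schauderPt, schauderVar, Fin.sum_univ_three]
  · have hj : j < 2 ^ k := hi
    rw [wienerCov]
    simp_rw [mul_assoc, ← Finset.mul_sum, sum_schauderWt_min _ hj, coe_schauderPt hj]
    simp only [schauderWt, dyadicPt, Fin.sum_univ_three, Matrix.cons_val_zero,
      Matrix.cons_val_one, Matrix.cons_val]
    have e : ((j : ℝ) + 1) / 2 ^ k = j / 2 ^ k + 1 / 2 ^ k := by ring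
    have hp : (0 : ℝ) < 1 / 2 ^ k := by positivity
    rw [e]
    generalize (j : ℝ) / 2 ^ k = l
    have ev : schauderVar (some (k, j)) = 1 / 2 ^ k / 4 := by
      simp [schauderVar, pow_add]; ring
    rw [ev]
    generalize (1 : ℝ) / 2 ^ k = h at *
    rw [min_eq_right (a := (l + (l + h)) / 2) (b := l) (by linarith),
      min_eq_left (a := (l + (l + h)) / 2) (b := l + h) (by linarith),
      min_eq_left (a := l) (b := (l + (l + h)) / 2) (by linarith),
      min_eq_left (a := l) (b := l + h) (by linarith),
      min_eq_right (a := l + h) (b := (l + (l + h)) / 2) (by linarith),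
      min_eq_right (a := l + h) (b := l) (by linarith), min_self, min_self, min_self]
    ring

lemma wienerCov_schauder_of_ne {i i' : Option (ℕ × ℕ)} (hi : IsDyadicIndex i)
    (hi' : IsDyadicIndex i') (hne : i ≠ i') :
    wienerCov (schauderWt i) (schauderPt i) (schauderWt i') (schauderPt i') = 0 := by
  rcases i with _ | ⟨k, j⟩ <;> rcases i' with _ | ⟨k', j'⟩
  · exact absurd rfl hne
  · exact wienerCov_none_some hi'
  · rw [wienerCov_comm]; exact wienerCov_none_some hi
  · rcases lt_trichotomy k k' with h | h | h
    · exact wienerCov_eq_zero_of_lt hi hi' (Or.inl h)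
    · exact wienerCov_eq_zero_of_lt hi hi' (Or.inr ⟨h, by rintro rfl; exact hne (by rw [h])⟩)
    · rw [wienerCov_comm]; exact wienerCov_eq_zero_of_lt hi' hi (Or.inl h)

lemma schauderVar_pos (i : Option (ℕ × ℕ)) : 0 < schauderVar i := by
  rcases i with _ | ⟨k, j⟩ <;> simp [schauderVar]

/-- The Schauder coefficients are independent Gaussians under the Wiener measure. -/
lemma wiener_schauder_box {W : Measure PathSpace} (hW : IsWienerMeasure W)
    (F : Finset (Option (ℕ × ℕ))) (hF : ∀ i ∈ F, IsDyadicIndex i) (S : Option (ℕ × ℕ) → Set ℝ)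
    (hS : ∀ i, MeasurableSet (S i)) :
    W.real {ω | ∀ i ∈ F, schauder ω.1 i ∈ S i} =
      ∏ i ∈ F, (gaussianReal 0 (schauderVar i).toNNReal).real (S i) := by
  have hind := iIndepFun_linComb hW (fun i : F => schauderWt i) (fun i : F => schauderPt i)
    (fun i => by rw [wienerCov_schauder_self (hF i i.2)]; exact (schauderVar_pos _).le)
    (fun i i' h => wienerCov_schauder_of_ne (hF i i.2) (hF i' i'.2) (fun h' => h (Subtype.ext h')))
  have h := hind.measure_inter_preimage_eq_mul Finset.univ (sets := fun i => S i) fun i _ => hS i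
  have hset : {ω : PathSpace | ∀ i ∈ F, schauder ω.1 i ∈ S i} =
      ⋂ i ∈ (Finset.univ : Finset F), (fun ω : PathSpace => ∑ a, schauderWt (i : Option (ℕ × ℕ)) a *
        ω.1 (schauderPt (i : Option (ℕ × ℕ)) a)) ⁻¹' S i := by
    ext ω
    simp [schauder]
  rw [measureReal_def, hset, h, ENNReal.toReal_prod, ← Finset.prod_coe_sort F]
  refine Finset.prod_congr rfl fun i _ => ?_
  rw [← Measure.map_apply (measurable_linComb _ _) (hS i), map_linComb hW,
    wienerCov_schauder_self (hF i i.2), measureReal_def]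

/-- Grid points are dense. -/
lemma tendsto_gridPt_floor (t : unitInterval) :
    Tendsto (fun k : ℕ => gridPt (2 ^ k) ⌊(t : ℝ) * 2 ^ k⌋₊) atTop (𝓝 t) := by
  rw [tendsto_subtype_rng]
  have h1 : Tendsto (fun k : ℕ => (⌊(t : ℝ) * 2 ^ k⌋₊ : ℝ) / 2 ^ k) atTop (𝓝 (t : ℝ)) :=
    (tendsto_nat_floor_mul_div_atTop t.2.1).comp (tendsto_pow_atTop_atTop_of_one_lt one_lt_two)
  refine h1.congr fun k => ?_
  rw [coe_gridPt]
  · push_cast; rfl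
  · refine Nat.floor_le_of_le ?_
    push_cast
    exact mul_le_of_le_one_left (by positivity) t.2.2

lemma gridPt_two_mul (k j : ℕ) : gridPt (2 ^ (k + 1)) (2 * j) = gridPt (2 ^ k) j := by
  rw [gridPt, gridPt]
  congr 1
  push_cast
  rw [pow_succ]
  field_simp

/-- A function is bounded by the sum over the levels of the largest Schauder coefficients. -/
lemma abs_le_of_schauder_le {f : unitInterval → ℝ} (hf : Continuous f) (h0 : f 0 = 0)
    {c : ℝ} {e : ℕ → ℝ} (he : ∀ k, 0 ≤ e k) (h1 : |schauder f none| ≤ c)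
    (h : ∀ k j, j < 2 ^ k → |schauder f (some (k, j))| ≤ e k) {B : ℝ}
    (hB : ∀ K, c + ∑ k ∈ Finset.range K, e k ≤ B) (t : unitInterval) : |f t| ≤ B := by
  have hgrid : ∀ K j, j ≤ 2 ^ K → |f (gridPt (2 ^ K) j)| ≤ c + ∑ k ∈ Finset.range K, e k := by
    intro K
    induction K with
    | zero =>
      intro j hj
      rw [schauder_none] at h1
      have : j = 0 ∨ j = 1 := by rw [pow_zero] at hj; omega
      rcases this with rfl | rfl
      · have : gridPt (2 ^ 0) 0 = 0 := Subtype.ext (by rw [coe_gridPt (by simp)]; simp)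
        rw [this, h0]; simpa using (abs_nonneg _).trans h1
      · have : gridPt (2 ^ 0) 1 = 1 := Subtype.ext (by rw [coe_gridPt (by simp)]; simp)
        rw [this]; simpa using h1
    | succ K ih =>
      intro j hj
      rw [Finset.sum_range_succ]
      rcases Nat.even_or_odd' j with ⟨i, rfl | rfl⟩
      · rw [gridPt_two_mul]
        have := ih i (by rw [pow_succ] at hj; omega)
        linarith [he K]
      · have hi : i < 2 ^ K := by rw [pow_succ] at hj; omega
        have := h K i hi
        rw [schauder_some] at this
        have h2 := ih i hi.le
        have h3 := ih (i + 1) hi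
        rw [abs_le] at *
        constructor <;> linarith [this.1, this.2, h2.1, h2.2, h3.1, h3.2]
  refine le_of_tendsto ((hf.abs.tendsto t).comp (tendsto_gridPt_floor t))
    (Eventually.of_forall fun k => (hgrid k _ ?_).trans (hB k))
  refine Nat.floor_le_of_le ?_
  push_cast
  exact mul_le_of_le_one_left (by positivity) t.2.2

/-- The tent function of height `1` over the dyadic interval `[j/2^k, (j+1)/2^k]`. -/
def tent (k j : ℕ) (t : ℝ) : ℝ :=
  2 ^ (k + 2) * (min t (((j : ℝ) / 2 ^ k + (j + 1) / 2 ^ k) / 2) -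
    (min t ((j : ℝ) / 2 ^ k) + min t ((j + 1 : ℝ) / 2 ^ k)) / 2)

lemma continuous_tent (k j : ℕ) : Continuous (tent k j) := by
  unfold tent
  fun_prop

lemma tent_eq_zero {k j : ℕ} {t : ℝ} (h : t ≤ (j : ℝ) / 2 ^ k ∨ (j + 1 : ℝ) / 2 ^ k ≤ t) :
    tent k j t = 0 := by
  rw [tent, min_midpoint (dyadic_left_le_right _ _) h, mul_zero]

lemma abs_tent_le_one (k j : ℕ) (t : ℝ) : |tent k j t| ≤ 1 := by
  by_cases h : t ≤ (j : ℝ) / 2 ^ k ∨ (j + 1 : ℝ) / 2 ^ k ≤ t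
  · rw [tent_eq_zero h]; simp
  · push Not at h
    have e : ((j : ℝ) + 1) / 2 ^ k = j / 2 ^ k + 1 / 2 ^ k := by ring
    have e2 : (2 : ℝ) ^ (k + 2) = 4 / (1 / 2 ^ k) := by rw [pow_add]; field_simp; norm_num
    have hp : (0 : ℝ) < 1 / 2 ^ k := by positivity
    rw [tent, e2]
    rw [e] at h ⊢
    generalize (j : ℝ) / 2 ^ k = l at *
    generalize (1 : ℝ) / 2 ^ k = d at *
    rw [min_eq_right h.1.le, min_eq_left h.2.le, abs_mul, abs_of_pos (by positivity : 0 < 4 / d),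
      div_mul_eq_mul_div, div_le_one hp]
    have : |min t ((l + (l + d)) / 2) - (l + t) / 2| ≤ d / 4 := by
      rcases le_total t ((l + (l + d)) / 2) with h' | h'
      · rw [min_eq_left h', abs_le]; constructor <;> linarith
      · rw [min_eq_right h', abs_le]; constructor <;> linarith
    linarith

lemma abs_tent_sub_le (k j : ℕ) (x y : ℝ) : |tent k j x - tent k j y| ≤ 2 ^ (k + 3) * |x - y| := by
  have h : ∀ p : ℝ, |min x p - min y p| ≤ |x - y| := fun p =>
    (abs_inf_sub_inf_le_abs x y p)
  have h1 := h (((j : ℝ) / 2 ^ k + (j + 1) / 2 ^ k) / 2)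
  have h2 := h ((j : ℝ) / 2 ^ k)
  have h3 := h ((j + 1 : ℝ) / 2 ^ k)
  rw [tent, tent, ← mul_sub, abs_mul, abs_of_pos (by positivity : (0 : ℝ) < 2 ^ (k + 2)),
    pow_succ _ (k + 2), mul_assoc]
  refine mul_le_mul_of_nonneg_left ?_ (by positivity)
  rw [abs_le] at *
  constructor <;> linarith [h1.1, h1.2, h2.1, h2.2, h3.1, h3.2]

lemma tent_eq_sum {k j : ℕ} (hj : j < 2 ^ k) (t : ℝ) :
    tent k j t = 2 ^ (k + 2) * ∑ b, schauderWt (some (k, j)) b * min t (schauderPt (some (k, j)) b) := by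
  rw [sum_schauderWt_min _ hj, tent]

lemma schauder_tent {k j : ℕ} (hj : j < 2 ^ k) {i : Option (ℕ × ℕ)} (hi : IsDyadicIndex i) :
    schauder (fun t : unitInterval => tent k j t) i = if i = some (k, j) then 1 else 0 := by
  have h : schauder (fun t : unitInterval => tent k j t) i = 2 ^ (k + 2) *
      wienerCov (schauderWt i) (schauderPt i) (schauderWt (some (k, j)))
        (schauderPt (some (k, j))) := by
    simp_rw [schauder, tent_eq_sum hj, wienerCov, Finset.mul_sum]
    refine Finset.sum_congr rfl fun a _ => Finset.sum_congr rfl fun b _ => ?_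
    ring
  rw [h]
  split_ifs with hij
  · subst hij
    rw [wienerCov_schauder_self hi, schauderVar]
    field_simp
  · rw [wienerCov_schauder_of_ne hi (i' := some (k, j)) hj hij, mul_zero]

/-- The sign `±1` encoded by a Boolean. -/
def boolSign (b : Bool) : ℝ := if b then 1 else -1

lemma abs_boolSign (b : Bool) : |boolSign b| = 1 := by cases b <;> simp [boolSign]

/-- Signed sum of the tents of level `k`. -/
def tentLevel (s : ℕ × ℕ → Bool) (k : ℕ) (t : ℝ) : ℝ :=
  ∑ j ∈ Finset.range (2 ^ k), boolSign (s (k, j)) * tent k j t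

lemma exists_dyadic_interval (k : ℕ) {t : ℝ} (h0 : 0 ≤ t) (h1 : t ≤ 1) :
    ∃ j < 2 ^ k, ∀ i, i ≠ j → tent k i t = 0 := by
  have key : ∀ j : ℕ, (j : ℝ) / 2 ^ k ≤ t → t ≤ (j + 1 : ℝ) / 2 ^ k →
      ∀ i, i ≠ j → tent k i t = 0 := by
    intro j hl hr i hij
    refine tent_eq_zero ?_
    rcases lt_or_gt_of_ne hij with h | h
    · right
      refine le_trans ?_ hl
      gcongr; exact_mod_cast h
    · left
      refine hr.trans ?_
      gcongr; exact_mod_cast h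
  rcases eq_or_lt_of_le h1 with rfl | h1
  · have hpos : 0 < 2 ^ k := by positivity
    have hc : ((2 ^ k - 1 : ℕ) : ℝ) = 2 ^ k - 1 := by
      rw [Nat.cast_sub hpos]; simp
    refine ⟨2 ^ k - 1, by omega, key _ ?_ ?_⟩
    · rw [hc, div_le_one (by positivity)]; linarith
    · rw [hc, le_div_iff₀ (by positivity)]; linarith
  · refine ⟨⌊t * 2 ^ k⌋₊, ?_, key _ ?_ ?_⟩
    · rw [Nat.floor_lt (by positivity)]
      push_cast
      exact mul_lt_of_lt_one_left (by positivity) h1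
    · rw [div_le_iff₀ (by positivity)]
      exact Nat.floor_le (by positivity)
    · rw [le_div_iff₀ (by positivity)]
      exact (Nat.lt_floor_add_one _).le

lemma tentLevel_eq {k j : ℕ} (hj : j < 2 ^ k) {t : ℝ} (h : ∀ i, i ≠ j → tent k i t = 0)
    (s : ℕ × ℕ → Bool) : tentLevel s k t = boolSign (s (k, j)) * tent k j t := by
  rw [tentLevel, Finset.sum_eq_single j]
  · intro i _ hi
    rw [h i hi, mul_zero]
  · intro h'
    exact absurd (Finset.mem_range.2 hj) h'

lemma abs_tentLevel_le_one (s : ℕ × ℕ → Bool) (k : ℕ) (t : unitInterval) :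
    |tentLevel s k t| ≤ 1 := by
  obtain ⟨j, hj, h⟩ := exists_dyadic_interval k t.2.1 t.2.2
  rw [tentLevel_eq hj h, abs_mul, abs_boolSign, one_mul]
  exact abs_tent_le_one _ _ _

lemma abs_tentLevel_sub_le (s : ℕ × ℕ → Bool) (k : ℕ) (x y : unitInterval) :
    |tentLevel s k x - tentLevel s k y| ≤ 2 ^ (k + 4) * |(x : ℝ) - y| := by
  obtain ⟨i, hi, hx⟩ := exists_dyadic_interval k x.2.1 x.2.2
  obtain ⟨j, hj, hy⟩ := exists_dyadic_interval k y.2.1 y.2.2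
  have h1 := abs_tent_sub_le k i x y
  have h2 := abs_tent_sub_le k j x y
  have hp : 0 ≤ (2 : ℝ) ^ (k + 3) * |(x : ℝ) - y| := by positivity
  have e : (2 : ℝ) ^ (k + 4) * |(x : ℝ) - y| = 2 * (2 ^ (k + 3) * |(x : ℝ) - y|) := by
    rw [pow_succ _ (k + 3)]; ring
  rw [e, tentLevel_eq hi hx, tentLevel_eq hj hy]
  by_cases hij : i = j
  · subst hij
    rw [← mul_sub, abs_mul, abs_boolSign, one_mul]
    linarith
  · rw [hy i hij, sub_zero] at h1
    rw [hx j (Ne.symm hij), zero_sub, abs_neg] at h2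
    refine (abs_sub _ _).trans ?_
    rw [abs_mul, abs_mul, abs_boolSign, abs_boolSign]
    linarith

lemma summable_tentLevel {ρ : ℝ} (h0 : 0 < ρ) (h1 : ρ < 1) (s : ℕ × ℕ → Bool)
    (t : unitInterval) : Summable fun k => ρ ^ k * tentLevel s k t := by
  refine Summable.of_norm_bounded (summable_geometric_of_lt_one h0.le h1) fun k => ?_
  rw [norm_mul, Real.norm_eq_abs, Real.norm_eq_abs, abs_of_pos (pow_pos h0 k)]
  exact mul_le_of_le_one_right (by positivity) (abs_tentLevel_le_one s k t)

/-- The path with Schauder coefficients `± ρ^k` on the `k`-th level. -/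
def signPath {ρ : ℝ} (h0 : 0 < ρ) (h1 : ρ < 1) (s : ℕ × ℕ → Bool) : PathSpace :=
  ⟨⟨fun t => ∑' k, ρ ^ k * tentLevel s k t, by
    refine continuous_tsum (u := fun k => ρ ^ k) (fun k => ?_)
      (summable_geometric_of_lt_one h0.le h1) fun k t => ?_
    · unfold tentLevel
      have := continuous_tent k
      fun_prop
    · rw [norm_mul, Real.norm_eq_abs, Real.norm_eq_abs, abs_of_pos (pow_pos h0 k)]
      exact mul_le_of_le_one_right (by positivity) (abs_tentLevel_le_one s k t)⟩, by
    have : ∀ k, tentLevel s k (0 : unitInterval) = 0 := fun k =>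
      Finset.sum_eq_zero fun j _ => by
        rw [tent_eq_zero (Or.inl _), mul_zero]
        simp only [Set.Icc.coe_zero]
        positivity
    simp only [ContinuousMap.coe_mk, this, mul_zero, tsum_zero]⟩

lemma signPath_apply {ρ : ℝ} (h0 : 0 < ρ) (h1 : ρ < 1) (s : ℕ × ℕ → Bool) (t : unitInterval) :
    (signPath h0 h1 s).1 t = ∑' k, ρ ^ k * tentLevel s k t := rfl

lemma schauder_signPath {ρ : ℝ} (h0 : 0 < ρ) (h1 : ρ < 1) (s : ℕ × ℕ → Bool)
    {i : Option (ℕ × ℕ)} (hi : IsDyadicIndex i) :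
    schauder (signPath h0 h1 s).1 i = ∑' k, ρ ^ k *
      ∑ j ∈ Finset.range (2 ^ k), if i = some (k, j) then boolSign (s (k, j)) else 0 := by
  have hlevel : ∀ k, schauder (fun t : unitInterval => tentLevel s k t) i =
      ∑ j ∈ Finset.range (2 ^ k), if i = some (k, j) then boolSign (s (k, j)) else 0 := by
    intro k
    have : schauder (fun t : unitInterval => tentLevel s k t) i = ∑ j ∈ Finset.range (2 ^ k),
        boolSign (s (k, j)) * schauder (fun t : unitInterval => tent k j t) i := by
      simp_rw [schauder, tentLevel, Finset.mul_sum]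
      rw [Finset.sum_comm]
      refine Finset.sum_congr rfl fun a _ => Finset.sum_congr rfl fun b _ => ?_
      ring
    rw [this]
    refine Finset.sum_congr rfl fun j hj => ?_
    rw [schauder_tent (Finset.mem_range.1 hj) hi]
    simp
  simp_rw [← hlevel, schauder, signPath_apply, Finset.mul_sum]
  rw [Summable.tsum_finsetSum]
  · refine Finset.sum_congr rfl fun a _ => ?_
    rw [← tsum_mul_left]
    exact tsum_congr fun k => by ring
  · intro a _
    refine ((summable_tentLevel h0 h1 s (schauderPt i a)).mul_left (schauderWt i a)).congr
      fun k => by ring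

lemma schauder_signPath_none {ρ : ℝ} (h0 : 0 < ρ) (h1 : ρ < 1) (s : ℕ × ℕ → Bool) :
    schauder (signPath h0 h1 s).1 none = 0 := by
  rw [schauder_signPath h0 h1 s (i := none) trivial]
  simp

lemma schauder_signPath_some {ρ : ℝ} (h0 : 0 < ρ) (h1 : ρ < 1) (s : ℕ × ℕ → Bool)
    {k j : ℕ} (hj : j < 2 ^ k) :
    schauder (signPath h0 h1 s).1 (some (k, j)) = ρ ^ k * boolSign (s (k, j)) := by
  rw [schauder_signPath h0 h1 s (i := some (k, j)) hj, tsum_eq_single k]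
  · rw [Finset.sum_eq_single j]
    · simp
    · intro b _ hb
      simp [hb.symm]
    · intro h
      exact absurd (Finset.mem_range.2 hj) h
  · intro k' hk'
    simp [hk'.symm]

/-- The signed paths are `b`-Hölder as soon as `ρ * 2 ^ b < 1`. -/
lemma signPath_holder {ρ : ℝ} (h0 : 0 < ρ) (h1 : ρ < 1) {b : ℝ} (hb0 : 0 < b) (hb1 : b < 1)
    (hb : ρ * 2 ^ b < 1) (s : ℕ × ℕ → Bool) :
    ∃ C : ℝ, 0 < C ∧ ∀ x y : unitInterval,
      |(signPath h0 h1 s).1 x - (signPath h0 h1 s).1 y| ≤ C * |(x : ℝ) - y| ^ b := by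
  have hg0 : 0 ≤ ρ * (2 : ℝ) ^ b := by positivity
  have hgs := summable_geometric_of_lt_one hg0 hb
  refine ⟨2 * 16 ^ b * ∑' k, (ρ * (2 : ℝ) ^ b) ^ k, ?_, fun x y => ?_⟩
  · have := hgs.tsum_pos (fun k => by positivity) 0 (by simp)
    positivity
  have hterm : ∀ k, |ρ ^ k * tentLevel s k x - ρ ^ k * tentLevel s k y| ≤
      2 * 16 ^ b * |(x : ℝ) - y| ^ b * (ρ * (2 : ℝ) ^ b) ^ k := by
    intro k
    rw [← mul_sub, abs_mul, abs_of_pos (pow_pos h0 k)]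
    have hA : |tentLevel s k x - tentLevel s k y| ≤ 2 * (2 ^ (k + 4) * |(x : ℝ) - y|) ^ b := by
      set u : ℝ := 2 ^ (k + 4) * |(x : ℝ) - y| with hu
      have hu0 : 0 ≤ u := by positivity
      have hl := abs_tentLevel_sub_le s k x y
      rw [← hu] at hl
      rcases le_total u 1 with h | h
      · rcases hu0.eq_or_lt with h' | h'
        · rw [← h', Real.zero_rpow hb0.ne']
          rw [← h'] at hl
          linarith
        · have := Real.rpow_le_rpow_of_exponent_ge h' h hb1.le
          rw [Real.rpow_one] at this
          linarith
      · have h2 : |tentLevel s k x - tentLevel s k y| ≤ 2 := by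
          have := abs_sub (tentLevel s k x) (tentLevel s k y)
          linarith [abs_tentLevel_le_one s k x, abs_tentLevel_le_one s k y]
        have := Real.one_le_rpow h hb0.le
        linarith
    calc ρ ^ k * |tentLevel s k x - tentLevel s k y|
        ≤ ρ ^ k * (2 * (2 ^ (k + 4) * |(x : ℝ) - y|) ^ b) := by gcongr
      _ = _ := by
        rw [Real.mul_rpow (by positivity) (by positivity), pow_add, Real.mul_rpow (by positivity)
          (by positivity), mul_pow, ← Real.rpow_natCast (2 ^ b : ℝ) k, ← Real.rpow_natCast 2 k,
          ← Real.rpow_mul (by norm_num), ← Real.rpow_mul (by norm_num), mul_comm b (k : ℝ)]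
        norm_num
        ring
  rw [signPath_apply, signPath_apply, ← (summable_tentLevel h0 h1 s x).tsum_sub
    (summable_tentLevel h0 h1 s y)]
  have hs := hgs.mul_left (2 * 16 ^ b * |(x : ℝ) - y| ^ b)
  rw [← Real.norm_eq_abs]
  refine (tsum_of_norm_bounded hs.hasSum fun k => hterm k).trans (le_of_eq ?_)
  rw [tsum_mul_left]
  ring

lemma Qvar_le_of_holder {ω : PathSpace} {C b : ℝ} (hC : 0 < C)
    (h : ∀ x y : unitInterval, |ω.1 x - ω.1 y| ≤ C * |(x : ℝ) - y| ^ b) {n : ℕ} (hn : 0 < n) :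
    Qvar ω n ≤ C * (n : ℝ) ^ (-b) := by
  have hn' : (0 : ℝ) < n := by exact_mod_cast hn
  have hb : 0 ≤ C * (n : ℝ) ^ (-b) := by positivity
  rw [Qvar, Real.sqrt_le_left hb, one_div, inv_mul_le_iff₀ hn']
  have hi : ∀ i ∈ Finset.range n, (ω.1 (gridPt n (i + 1)) - ω.1 (gridPt n i)) ^ 2 ≤
      (C * (n : ℝ) ^ (-b)) ^ 2 := by
    intro i hi
    rw [Finset.mem_range] at hi
    rw [← sq_abs]
    refine pow_le_pow_left₀ (abs_nonneg _) ((h _ _).trans (le_of_eq ?_)) 2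
    rw [coe_gridPt hi.le, coe_gridPt hi]
    have e : ((i + 1 : ℕ) : ℝ) / n - (i : ℝ) / n = (n : ℝ)⁻¹ := by
      push_cast; field_simp; ring
    rw [e, abs_of_pos (by positivity), Real.inv_rpow hn'.le, Real.rpow_neg hn'.le]
  refine (Finset.sum_le_sum hi).trans (le_of_eq ?_)
  simp

lemma abs_sub_le_variation (g : ℕ → ℝ) {a b : ℕ} (h : a ≤ b) :
    |g b - g a| ≤ ∑ i ∈ Finset.range b, |g (i + 1) - g i| -
      ∑ i ∈ Finset.range a, |g (i + 1) - g i| := by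
  induction b, h using Nat.le_induction with
  | base => simp
  | succ b _ ih =>
    rw [Finset.sum_range_succ]
    have := abs_add_le (g (b + 1) - g b) (g b - g a)
    rw [sub_add_sub_cancel] at this
    linarith

lemma variation_div_le_Qvar (ω : PathSpace) {n : ℕ} (hn : 0 < n) :
    (∑ i ∈ Finset.range n, |ω.1 (gridPt n (i + 1)) - ω.1 (gridPt n i)|) / n ≤ Qvar ω n := by
  have hn' : (0 : ℝ) < n := by exact_mod_cast hn
  refine Real.le_sqrt_of_sq_le ?_
  have := sq_sum_le_card_mul_sum_sq (s := Finset.range n)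
    (f := fun i => |ω.1 (gridPt n (i + 1)) - ω.1 (gridPt n i)|)
  simp only [Finset.card_range, sq_abs] at this
  rw [div_pow, div_le_iff₀ (by positivity)]
  calc _ ≤ _ := this
    _ = _ := by field_simp

/-- Rounding a dyadic point to the grid of mesh `1 / n`. -/
lemma abs_gridPt_sub_le {n k j : ℕ} (hn : 0 < n) (hj : j ≤ 2 ^ k) :
    |(gridPt n (j * n / 2 ^ k) : ℝ) - gridPt (2 ^ k) j| ≤ (n : ℝ)⁻¹ := by
  have hn' : (0 : ℝ) < n := by exact_mod_cast hn
  have hle : j * n / 2 ^ k ≤ n := by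
    refine Nat.div_le_of_le_mul ?_
    exact Nat.mul_le_mul_right n hj
  rw [coe_gridPt hle, coe_gridPt hj]
  set a := j * n / 2 ^ k with ha
  have h1 : a * 2 ^ k ≤ j * n := Nat.div_mul_le_self _ _
  have h2 : j * n < (a + 1) * 2 ^ k := by
    have := Nat.lt_div_mul_add (a := j * n) (b := 2 ^ k) (by positivity)
    rw [← ha] at this
    linarith
  have h1' : (a : ℝ) * 2 ^ k ≤ j * n := by exact_mod_cast h1
  have h2' : (j : ℝ) * n ≤ (a + 1) * 2 ^ k := by exact_mod_cast h2.le
  push_cast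
  have h3 : (a : ℝ) / n ≤ j / 2 ^ k := by rw [div_le_div_iff₀ hn' (by positivity)]; exact h1'
  have h4 : (j : ℝ) / 2 ^ k ≤ a / n + (n : ℝ)⁻¹ := by
    rw [← one_div, ← add_div, div_le_div_iff₀ (by positivity) hn']; exact h2'
  rw [abs_le]
  constructor <;> linarith

/-- Lower bound for the discrete quadratic variation of a signed path. -/
lemma signPath_Qvar_ge {ρ : ℝ} (h0 : 0 < ρ) (h1 : ρ < 1) (s : ℕ × ℕ → Bool) {C b : ℝ}
    (hb : 0 < b) (hC : 0 < C) (h : ∀ x y : unitInterval,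
      |(signPath h0 h1 s).1 x - (signPath h0 h1 s).1 y| ≤ C * |(x : ℝ) - y| ^ b)
    {n k : ℕ} (hn : 0 < n) (hnk : 4 * (C * (n : ℝ) ^ (-b)) ≤ ρ ^ k) :
    (2 * ρ) ^ k / n ≤ Qvar (signPath h0 h1 s) n := by
  have hn' : (0 : ℝ) < n := by exact_mod_cast hn
  refine le_trans ?_ (variation_div_le_Qvar _ hn)
  gcongr
  set ω := signPath h0 h1 s with hω
  set g : ℕ → ℝ := fun i => ω.1 (gridPt n i) with hg
  set V : ℕ → ℝ := fun a => ∑ i ∈ Finset.range a, |g (i + 1) - g i| with hV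
  have hround : ∀ k j : ℕ, j ≤ 2 ^ k → |g (j * n / 2 ^ k) - ω.1 (gridPt (2 ^ k) j)| ≤
      C * (n : ℝ) ^ (-b) := by
    intro k j hj
    refine (h _ _).trans ?_
    rw [Real.rpow_neg hn'.le, ← Real.inv_rpow hn'.le]
    have := abs_gridPt_sub_le hn hj
    gcongr
  have hstep : ∀ j < 2 ^ k, ρ ^ k ≤ V ((j + 1) * n / 2 ^ k) - V (j * n / 2 ^ k) := by
    intro j hj
    have hj2 : 2 * j + 1 ≤ 2 ^ (k + 1) := by rw [pow_succ]; omega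
    have hs := schauder_signPath_some h0 h1 s hj
    rw [schauder_some, ← hω] at hs
    have hs' := congrArg abs hs
    rw [abs_mul, abs_boolSign, mul_one, abs_of_pos (pow_pos h0 k)] at hs'
    have r1 := hround k j hj.le
    have r2 := hround (k + 1) (2 * j + 1) hj2
    have r3 := hround k (j + 1) hj
    have o1 : j * n / 2 ^ k ≤ (2 * j + 1) * n / 2 ^ (k + 1) := by
      rw [Nat.le_div_iff_mul_le (by positivity), pow_succ, ← mul_assoc]
      have := Nat.div_mul_le_self (j * n) (2 ^ k)
      nlinarith
    have o2 : (2 * j + 1) * n / 2 ^ (k + 1) ≤ (j + 1) * n / 2 ^ k := by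
      rw [Nat.le_div_iff_mul_le (by positivity)]
      have := Nat.div_mul_le_self ((2 * j + 1) * n) (2 ^ (k + 1))
      rw [pow_succ, ← mul_assoc] at this
      rw [pow_succ]
      nlinarith
    have v1 := abs_sub_le_variation g o1
    have v2 := abs_sub_le_variation g o2
    simp only [hV]
    rw [abs_le] at r1 r2 r3 v1 v2
    rcases abs_cases (ω.1 (gridPt (2 ^ (k + 1)) (2 * j + 1)) -
      (ω.1 (gridPt (2 ^ k) j) + ω.1 (gridPt (2 ^ k) (j + 1))) / 2) with ⟨h', _⟩ | ⟨h', _⟩ <;>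
    rw [h'] at hs' <;> linarith [r1.1, r1.2, r2.1, r2.2, r3.1, r3.2, v1.1, v1.2, v2.1, v2.2]
  have hsum : ∀ j ≤ 2 ^ k, j * ρ ^ k ≤ V (j * n / 2 ^ k) := by
    intro j
    induction j with
    | zero => intro _; simp [hV]
    | succ j ih =>
      intro hj
      have h2 := hstep j hj
      have h3 := ih (by omega)
      push_cast
      linarith
  have := hsum (2 ^ k) le_rfl
  rw [Nat.mul_div_cancel_left _ (by positivity)] at this
  rw [mul_pow]
  exact_mod_cast this

lemma tendsto_neg_log_div_log {Q : ℕ → ℝ} {q : ℝ}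
    (hup : ∀ p < q, ∃ C > 0, ∀ᶠ n : ℕ in atTop, Q n ≤ C * (n : ℝ) ^ (-p))
    (hlo : ∀ p > q, ∃ c > 0, ∀ᶠ n : ℕ in atTop, c * (n : ℝ) ^ (-p) ≤ Q n) :
    Tendsto (fun n : ℕ => -Real.log (Q n) / Real.log n) atTop (𝓝 q) := by
  have hlog : Tendsto (fun n : ℕ => Real.log n) atTop atTop :=
    Real.tendsto_log_atTop.comp tendsto_natCast_atTop_atTop
  rw [tendsto_order]
  constructor
  · intro a ha
    obtain ⟨p, hap, hpq⟩ := exists_between ha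
    obtain ⟨C, hC, hCn⟩ := hup p hpq
    obtain ⟨c, hc, hcn⟩ := hlo (q + 1) (by linarith)
    have hbig := hlog.eventually_gt_atTop (Real.log C / (p - a))
    filter_upwards [hCn, hcn, hbig, hlog.eventually_gt_atTop 0, eventually_gt_atTop 0]
      with n h1 h2 h3 h4 h5
    have hn : (0 : ℝ) < n := by exact_mod_cast h5
    have hQ : 0 < Q n := lt_of_lt_of_le (by positivity) h2
    have := Real.log_le_log hQ h1
    rw [Real.log_mul hC.ne' (by positivity), Real.log_rpow hn] at this
    rw [div_lt_iff₀ (by linarith)] at h3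
    rw [lt_div_iff₀ h4]
    nlinarith
  · intro a ha
    obtain ⟨p, hpq, hap⟩ := exists_between ha
    obtain ⟨c, hc, hcn⟩ := hlo p hpq
    have hbig := hlog.eventually_gt_atTop (-Real.log c / (a - p))
    filter_upwards [hcn, hbig, hlog.eventually_gt_atTop 0, eventually_gt_atTop 0]
      with n h2 h3 h4 h5
    have hn : (0 : ℝ) < n := by exact_mod_cast h5
    have := Real.log_le_log (by positivity) h2
    rw [Real.log_mul hc.ne' (by positivity), Real.log_rpow hn] at this
    rw [div_lt_iff₀ (by linarith)] at h3
    rw [div_lt_iff₀ h4]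
    nlinarith

lemma two_rpow_neg_pos (q : ℝ) : (0 : ℝ) < 2 ^ (-q) := by positivity

lemma two_rpow_neg_lt_one {q : ℝ} (hq : 0 < q) : (2 : ℝ) ^ (-q) < 1 :=
  Real.rpow_lt_one_of_one_lt_of_neg one_lt_two (by linarith)

/-- The paths with Schauder coefficients `± 2 ^ (-q k)`. -/
def critPath {q : ℝ} (hq : 0 < q) (s : ℕ × ℕ → Bool) : PathSpace :=
  signPath (two_rpow_neg_pos q) (two_rpow_neg_lt_one hq) s

lemma critPath_holder {q b : ℝ} (hq : 0 < q) (hq1 : q < 1) (hb0 : 0 < b) (hb : b < q)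
    (s : ℕ × ℕ → Bool) : ∃ C : ℝ, 0 < C ∧ ∀ x y : unitInterval,
      |(critPath hq s).1 x - (critPath hq s).1 y| ≤ C * |(x : ℝ) - y| ^ b := by
  refine signPath_holder _ _ hb0 (hb.trans hq1) ?_ s
  rw [← Real.rpow_add two_pos]
  exact Real.rpow_lt_one_of_one_lt_of_neg one_lt_two (by linarith)

lemma critPath_Qvar_ge {q p : ℝ} (hq : 0 < q) (hq1 : q < 1) (hp : q < p) (s : ℕ × ℕ → Bool) :
    ∃ c > 0, ∀ᶠ n : ℕ in atTop, c * (n : ℝ) ^ (-p) ≤ Qvar (critPath hq s) n := by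
  have h1q : 0 < 1 - q := by linarith
  have hlt : max 0 (q * (1 - p) / (1 - q)) < q := by
    refine max_lt hq ?_
    rw [div_lt_iff₀ h1q]
    nlinarith
  obtain ⟨b, hb, hbq⟩ := exists_between hlt
  have hb0 : 0 < b := (le_max_left _ _).trans_lt hb
  have hbp : q * (1 - p) < b * (1 - q) := by
    have := (le_max_right _ _).trans_lt hb
    rwa [div_lt_iff₀ h1q] at this
  obtain ⟨C, hC, hol⟩ := critPath_holder hq hq1 hb0 hbq s
  refine ⟨(2⁻¹ * (4 * C) ^ (-1 / q)) ^ (1 - q), by positivity, ?_⟩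
  have hlim : Tendsto (fun n : ℕ => (n : ℝ) ^ b) atTop atTop :=
    (tendsto_rpow_atTop hb0).comp tendsto_natCast_atTop_atTop
  filter_upwards [hlim.eventually_ge_atTop (4 * C), eventually_gt_atTop 0] with n hn hn0
  have hn' : (0 : ℝ) < n := by exact_mod_cast hn0
  have hn1 : (1 : ℝ) ≤ n := by exact_mod_cast hn0
  -- `X` is the largest admissible value of `2 ^ k`
  set X : ℝ := ((n : ℝ) ^ b / (4 * C)) ^ (1 / q) with hX
  have hX1 : 1 ≤ X := Real.one_le_rpow (by rw [le_div_iff₀ (by positivity)]; linarith)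
    (by positivity)
  have hX0 : 0 < X := by linarith
  obtain ⟨k, hk1, hk2⟩ := exists_nat_pow_near hX1 one_lt_two
  have hXq : X ^ (-q) = 4 * (C * (n : ℝ) ^ (-b)) := by
    rw [hX, ← Real.rpow_mul (by positivity), show 1 / q * -q = -1 by field_simp,
      Real.rpow_neg_one, Real.rpow_neg hn'.le, inv_div]
    ring
  have hρ : ((2 : ℝ) ^ (-q)) ^ k = ((2 : ℝ) ^ k) ^ (-q) := by
    rw [← Real.rpow_natCast, ← Real.rpow_mul (by norm_num), ← Real.rpow_natCast,
      ← Real.rpow_mul (by norm_num), mul_comm]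
  have hcond : 4 * (C * (n : ℝ) ^ (-b)) ≤ ((2 : ℝ) ^ (-q)) ^ k := by
    rw [hρ, ← hXq]
    exact Real.rpow_le_rpow_of_nonpos (by positivity) hk1 (by linarith)
  refine le_trans ?_ (signPath_Qvar_ge _ _ s hb0 hC hol hn0 hcond)
  have e1 : (2 * (2 : ℝ) ^ (-q)) ^ k = ((2 : ℝ) ^ k) ^ (1 - q) := by
    rw [mul_pow, hρ, sub_eq_add_neg, Real.rpow_add (by positivity), Real.rpow_one]
  have e2 : 2⁻¹ * X ≤ 2 ^ k := by
    rw [pow_succ] at hk2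
    linarith
  have e3 : 2⁻¹ * X = 2⁻¹ * (4 * C) ^ (-1 / q) * (n : ℝ) ^ (b / q) := by
    rw [hX, Real.div_rpow (by positivity) (by positivity), ← Real.rpow_mul hn'.le, neg_div,
      Real.rpow_neg (by positivity)]
    rw [mul_one_div, div_eq_mul_inv ((n : ℝ) ^ (b / q))]
    ring
  rw [e1, le_div_iff₀ hn', mul_assoc]
  calc (2⁻¹ * (4 * C) ^ (-1 / q)) ^ (1 - q) * ((n : ℝ) ^ (-p) * n)
      = (2⁻¹ * (4 * C) ^ (-1 / q)) ^ (1 - q) * (n : ℝ) ^ (1 - p) := by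
        rw [sub_eq_add_neg 1 p, add_comm, Real.rpow_add hn', Real.rpow_one]
    _ ≤ (2⁻¹ * (4 * C) ^ (-1 / q)) ^ (1 - q) * (n : ℝ) ^ (b / q * (1 - q)) := by
        gcongr
        rw [div_mul_eq_mul_div, le_div_iff₀ hq]
        linarith
    _ = (2⁻¹ * X) ^ (1 - q) := by
        rw [e3, Real.mul_rpow (x := 2⁻¹ * (4 * C) ^ (-1 / q)) (by positivity) (by positivity),
          ← Real.rpow_mul hn'.le]
    _ ≤ _ := by gcongr

lemma critPath_mem_holderCrit {q : ℝ} (hq : 0 < q) (hq1 : q < 1) (s : ℕ × ℕ → Bool) :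
    critPath hq s ∈ holderCrit q := by
  have hlim : Tendsto (fun n : ℕ => -Real.log (Qvar (critPath hq s) n) / Real.log n)
      atTop (𝓝 q) := by
    refine tendsto_neg_log_div_log (fun p hp => ?_) fun p hp => critPath_Qvar_ge hq hq1 hp s
    obtain ⟨b, hb, hbq⟩ := exists_between (max_lt hq hp)
    obtain ⟨C, hC, hol⟩ := critPath_holder hq hq1 ((le_max_left _ _).trans_lt hb) hbq s
    refine ⟨C, hC, ?_⟩
    filter_upwards [eventually_gt_atTop 0] with n hn
    refine (Qvar_le_of_holder hC hol hn).trans ?_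
    have : (1 : ℝ) ≤ n := by exact_mod_cast hn
    have := (le_max_right 0 p).trans hb.le
    gcongr
  have hE := (continuous_coe_real_ereal.tendsto q).comp hlim
  refine ⟨?_, hE.liminf_eq, hE.limsup_eq⟩
  simp only [holderMinus, mem_iInter]
  intro b hb
  obtain ⟨C, _, hol⟩ := critPath_holder hq hq1 hb.1 hb.2 s
  exact ⟨C, hol⟩

lemma le_log_neg_log_div {m ε η : ℝ} (hε : 0 < ε) (hε1 : ε < 1) (hm : 0 < m)
    (h : m ≤ Real.exp (-(ε ^ (-η)))) :
    η ≤ Real.log (-Real.log m) / (-Real.log ε) := by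
  have h1 : ε ^ (-η) ≤ -Real.log m := by
    have := (Real.log_le_iff_le_exp hm).2 h
    linarith
  have h2 := Real.log_le_log (by positivity) h1
  rw [Real.log_rpow hε] at h2
  rw [le_div_iff₀ (by linarith [Real.log_neg hε hε1])]
  linarith

lemma log_neg_log_div_le {m ε η : ℝ} (hη : 0 ≤ η) (hε : 0 < ε) (hε1 : ε < 1) (hm1 : m ≤ 1)
    (h : Real.exp (-(ε ^ (-η))) ≤ m) :
    Real.log (-Real.log m) / (-Real.log ε) ≤ η := by
  have hm : 0 < m := (Real.exp_pos _).trans_le h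
  have hl : 0 < -Real.log ε := by linarith [Real.log_neg hε hε1]
  rw [div_le_iff₀ hl]
  have h1 : -Real.log m ≤ ε ^ (-η) := by
    have := (Real.le_log_iff_exp_le hm).2 h
    linarith
  rcases (Real.log_nonpos hm.le hm1).eq_or_lt with h0 | h0
  · rw [h0]
    simp only [neg_zero, Real.log_zero]
    positivity
  · have h2 := Real.log_le_log (by linarith) h1
    rw [Real.log_rpow hε] at h2
    linarith

lemma eventually_mem_Ioo_nhdsGT {a : ℝ} (ha : 0 < a) : ∀ᶠ ε in 𝓝[>] (0 : ℝ), ε ∈ Ioo 0 a :=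
  Ioo_mem_nhdsGT ha

lemma le_lowerLocOrd {μ : Measure PathSpace} {ω : PathSpace} {η : ℝ}
    (hpos : ∀ᶠ ε in 𝓝[>] (0 : ℝ), 0 < μ.real (ball ω ε))
    (h : ∀ᶠ ε in 𝓝[>] (0 : ℝ), μ.real (ball ω ε) ≤ Real.exp (-(ε ^ (-η)))) :
    (η : EReal) ≤ lowerLocOrd μ ω := by
  refine le_liminf_of_le (by isBoundedDefault) ?_
  filter_upwards [hpos, h, eventually_mem_Ioo_nhdsGT one_pos] with ε h1 h2 h3
  exact EReal.coe_le_coe_iff.2 (le_log_neg_log_div h3.1 h3.2 h1 h2)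

lemma upperLocOrd_le {μ : Measure PathSpace} [IsProbabilityMeasure μ] {ω : PathSpace} {η : ℝ}
    (hη : 0 ≤ η)
    (h : ∀ᶠ ε in 𝓝[>] (0 : ℝ), Real.exp (-(ε ^ (-η))) ≤ μ.real (ball ω ε)) :
    upperLocOrd μ ω ≤ (η : EReal) := by
  refine limsup_le_of_le (by isBoundedDefault) ?_
  filter_upwards [h, eventually_mem_Ioo_nhdsGT one_pos] with ε h2 h3
  exact EReal.coe_le_coe_iff.2 (log_neg_log_div_le hη h3.1 h3.2 measureReal_le_one h2)

lemma lowerLocOrd_le_upperLocOrd (μ : Measure PathSpace) (ω : PathSpace) :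
    lowerLocOrd μ ω ≤ upperLocOrd μ ω :=
  liminf_le_limsup

lemma eventually_measureReal_ball_pos {μ : Measure PathSpace} {ω : PathSpace}
    (h : 0 < lowerLocOrd μ ω) : ∀ᶠ ε in 𝓝[>] (0 : ℝ), 0 < μ.real (ball ω ε) := by
  by_contra hc
  rw [not_eventually] at hc
  refine absurd h (not_lt.2 (liminf_le_of_frequently_le' (hc.mono fun ε hε => ?_)))
  have : (μ (ball ω ε)).toReal = 0 := le_antisymm (not_lt.1 hε) ENNReal.toReal_nonneg
  simp [this]

lemma mem_levelOrd {μ : Measure PathSpace} [IsProbabilityMeasure μ] {ω : PathSpace} {ξ : ℝ}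
    (hξ : 0 < ξ)
    (hup : ∀ η, 0 < η → η < ξ →
      ∀ᶠ ε in 𝓝[>] (0 : ℝ), μ.real (ball ω ε) ≤ Real.exp (-(ε ^ (-η))))
    (hlow : ∀ η, ξ < η →
      ∀ᶠ ε in 𝓝[>] (0 : ℝ), Real.exp (-(ε ^ (-η))) ≤ μ.real (ball ω ε)) :
    ω ∈ levelOrd μ ξ := by
  have hpos : ∀ᶠ ε in 𝓝[>] (0 : ℝ), 0 < μ.real (ball ω ε) :=
    (hlow (ξ + 1) (by linarith)).mono fun ε h => (Real.exp_pos _).trans_le h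
  have h1 : (ξ : EReal) ≤ lowerLocOrd μ ω := by
    refine le_of_forall_lt fun c hc => ?_
    obtain ⟨η, h1, h2⟩ := EReal.lt_iff_exists_real_btwn.1
      (max_lt hc (EReal.coe_pos.2 hξ))
    refine ((le_max_left _ _).trans_lt h1).trans_le (le_lowerLocOrd hpos (hup η ?_ ?_))
    · exact EReal.coe_pos.1 ((le_max_right _ _).trans_lt h1)
    · exact EReal.coe_lt_coe_iff.1 h2
  have h2 : upperLocOrd μ ω ≤ (ξ : EReal) := by
    refine le_of_forall_gt fun c hc => ?_
    obtain ⟨η, h1, h2⟩ := EReal.lt_iff_exists_real_btwn.1 hc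
    have h1' := EReal.coe_lt_coe_iff.1 h1
    exact (upperLocOrd_le (hξ.trans h1').le (hlow η h1')).trans_lt h2
  have h3 := lowerLocOrd_le_upperLocOrd μ ω
  exact ⟨le_antisymm (h3.trans h2) h1, le_antisymm h2 (h1.trans h3)⟩

lemma le_of_mem_levelOrd {μ : Measure PathSpace} {ω : PathSpace} {ξ η : ℝ} (hξ : 0 < ξ)
    (hω : ω ∈ levelOrd μ ξ)
    (h : ∀ᶠ ε in 𝓝[>] (0 : ℝ), μ.real (ball ω ε) ≤ Real.exp (-(ε ^ (-η)))) : η ≤ ξ := by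
  have hpos := eventually_measureReal_ball_pos (μ := μ) (ω := ω) (by
    rw [hω.1]
    exact EReal.coe_pos.2 hξ)
  have := le_lowerLocOrd hpos h
  rw [hω.1] at this
  exact EReal.coe_le_coe_iff.1 this

lemma eventually_rpow_neg_le {c a b : ℝ} (hc : 0 < c) (hab : a < b) :
    ∀ᶠ ε in 𝓝[>] (0 : ℝ), ε ^ (-a) ≤ c * ε ^ (-b) := by
  have h1 : Tendsto (fun ε : ℝ => ε ^ (b - a)) (𝓝[>] 0) (𝓝 0) := by
    have := (Real.continuousAt_rpow_const 0 (b - a) (Or.inr (by linarith))).tendsto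
    rw [Real.zero_rpow (by linarith)] at this
    exact this.mono_left nhdsWithin_le_nhds
  filter_upwards [h1.eventually_lt_const hc, self_mem_nhdsWithin] with ε h2 h3
  have h3 : 0 < ε := h3
  calc ε ^ (-a) = ε ^ (b - a) * ε ^ (-b) := by rw [← Real.rpow_add h3]; ring_nf
    _ ≤ _ := by gcongr

lemma abs_apply_sub_le (ω ω' : PathSpace) (t : unitInterval) : |ω.1 t - ω'.1 t| ≤ dist ω ω' := by
  rw [← Real.dist_eq]
  exact ContinuousMap.dist_apply_le_dist t

lemma abs_schauder_sub_le (ω ω' : PathSpace) (k j : ℕ) :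
    |schauder ω.1 (some (k, j)) - schauder ω'.1 (some (k, j))| ≤ 2 * dist ω ω' := by
  rw [schauder_some, schauder_some]
  have h1 := abs_le.1 (abs_apply_sub_le ω ω' (gridPt (2 ^ (k + 1)) (2 * j + 1)))
  have h2 := abs_le.1 (abs_apply_sub_le ω ω' (gridPt (2 ^ k) j))
  have h3 := abs_le.1 (abs_apply_sub_le ω ω' (gridPt (2 ^ k) (j + 1)))
  rw [abs_le]
  constructor <;> linarith [h1.1, h1.2, h2.1, h2.2, h3.1, h3.2]

/-- The indices of the Schauder coefficients of level `k`. -/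
def levelIndices (k : ℕ) : Finset (Option (ℕ × ℕ)) :=
  (Finset.range (2 ^ k)).map ((Function.Embedding.sectR k ℕ).trans Function.Embedding.some)

lemma mem_levelIndices {k : ℕ} {i : Option (ℕ × ℕ)} :
    i ∈ levelIndices k ↔ ∃ j < 2 ^ k, some (k, j) = i := by
  simp [levelIndices]

lemma prod_levelIndices (k : ℕ) (g : Option (ℕ × ℕ) → ℝ) :
    ∏ i ∈ levelIndices k, g i = ∏ j ∈ Finset.range (2 ^ k), g (some (k, j)) := by
  simp [levelIndices]

lemma wiener_ball_le_two_pow {W : Measure PathSpace} (hW : IsWienerMeasure W) (ω : PathSpace)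
    {ε : ℝ} (hε : 0 < ε) {k : ℕ} (hk : 64 * ε ^ 2 * 2 ^ k ≤ 1) :
    W.real (ball ω ε) ≤ (1 / 2) ^ 2 ^ k := by
  have := hW.1
  set F := levelIndices k with hF
  have hFd : ∀ i ∈ F, IsDyadicIndex i := by
    intro i hi
    obtain ⟨j, hj, rfl⟩ := mem_levelIndices.1 hi
    exact hj
  set S : Option (ℕ × ℕ) → Set ℝ :=
    fun i => Icc (schauder ω.1 i - 2 * ε) (schauder ω.1 i + 2 * ε)
  have hsub : ball ω ε ⊆ {ω' | ∀ i ∈ F, schauder ω'.1 i ∈ S i} := by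
    intro ω' hω' i hi
    obtain ⟨j, hj, rfl⟩ := mem_levelIndices.1 hi
    have h1 := abs_le.1 (abs_schauder_sub_le ω' ω k j)
    have h2 := mem_ball.1 hω'
    exact ⟨by linarith [h1.1], by linarith [h1.2]⟩
  refine (measureReal_mono hsub).trans ?_
  rw [wiener_schauder_box hW F hFd S fun i => measurableSet_Icc, hF, prod_levelIndices]
  refine (Finset.prod_le_prod (g := fun _ => (1 / 2 : ℝ)) (fun _ _ => measureReal_nonneg)
    fun j _ => ?_).trans (by simp)
  have hv := schauderVar_pos (some (k, j))
  refine (gaussianReal_Icc_le (by simpa using hv) _ (by positivity)).trans ?_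
  rw [Real.coe_toNNReal _ hv.le, ← div_eq_mul_inv, div_le_iff₀ (by positivity)]
  have : (2 * (2 * ε)) * 2 ≤ √(2 * Real.pi * schauderVar (some (k, j))) := by
    refine Real.le_sqrt_of_sq_le ?_
    simp only [schauderVar]
    rw [pow_add, mul_one_div, le_div_iff₀ (by positivity)]
    have := Real.pi_gt_three
    nlinarith
  linarith

lemma wiener_ball_le_of_lt_two {W : Measure PathSpace} (hW : IsWienerMeasure W) (ω : PathSpace)
    {η : ℝ} (hη : η < 2) :
    ∀ᶠ ε in 𝓝[>] (0 : ℝ), W.real (ball ω ε) ≤ Real.exp (-(ε ^ (-η))) := by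
  filter_upwards [eventually_rpow_neg_le (show (0 : ℝ) < 1 / 256 by norm_num) hη,
    eventually_mem_Ioo_nhdsGT (show (0 : ℝ) < 1 / 8 by norm_num)] with ε h1 h2
  have hε := h2.1
  have hX : 1 ≤ 1 / (64 * ε ^ 2) := by
    rw [le_div_iff₀ (by positivity)]
    nlinarith [h2.2]
  obtain ⟨k, hk1, hk2⟩ := exists_nat_pow_near hX one_lt_two
  refine (wiener_ball_le_two_pow hW ω hε (k := k) ?_).trans ?_
  · rwa [le_div_iff₀ (by positivity), mul_comm] at hk1
  · rw [one_div, inv_pow, ← Real.exp_log (show (0 : ℝ) < 2 ^ 2 ^ k by positivity), ← Real.exp_neg,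
      Real.log_pow]
    gcongr
    refine h1.trans ?_
    have h3 : ε ^ (-2 : ℝ) = 1 / ε ^ 2 := by
      rw [Real.rpow_neg hε.le, one_div]
      norm_cast
    rw [h3]
    rw [pow_succ 2 k, div_lt_iff₀ (by positivity)] at hk2
    have h4 := Real.log_two_gt_d9
    rw [one_div_mul_one_div, div_le_iff₀ (by positivity)]
    push_cast
    nlinarith [show (0 : ℝ) < 2 ^ k * ε ^ 2 by positivity]

lemma levelOrd_eq_empty {W : Measure PathSpace} (hW : IsWienerMeasure W) {ξ : ℝ} (h0 : 0 < ξ)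
    (h2 : ξ < 2) : levelOrd W ξ = ∅ := by
  refine eq_empty_of_forall_notMem fun ω hω => ?_
  obtain ⟨η, h3, h4⟩ := exists_between h2
  exact absurd (le_of_mem_levelOrd h0 hω (wiener_ball_le_of_lt_two hW ω h4)) (not_le.2 h3)

lemma min_increment {n : ℕ} (hn : 0 < n) (i j : ℕ) :
    min ((i + 1 : ℕ) / n : ℝ) ((j + 1 : ℕ) / n) - min ((i + 1 : ℕ) / n : ℝ) (j / n)
      - min (i / n : ℝ) ((j + 1 : ℕ) / n) + min (i / n : ℝ) (j / n)
      = if i = j then (1 / n : ℝ) else 0 := by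
  have hn' : (0 : ℝ) < n := by exact_mod_cast hn
  simp only [min_div_div_right hn'.le, ← Nat.cast_min]
  rcases lt_trichotomy i j with h | h | h
  · rw [if_neg h.ne, min_eq_left (show i + 1 ≤ j + 1 by omega), min_eq_left (show i + 1 ≤ j by omega),
      min_eq_left (show i ≤ j + 1 by omega), min_eq_left h.le]
    ring
  · subst h
    simp only [min_self, if_true, min_eq_right (Nat.le_succ i), min_eq_left (Nat.le_succ i)]
    push_cast
    ring
  · rw [if_neg h.ne', min_eq_right (show j + 1 ≤ i + 1 by omega),
      min_eq_right (show j ≤ i + 1 by omega),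
      min_eq_right (show j + 1 ≤ i by omega), min_eq_right h.le]
    ring

lemma map_sum_increments {W : Measure PathSpace} (hW : IsWienerMeasure W) {n : ℕ} (hn : 0 < n)
    (a : ℕ → ℝ) :
    W.map (fun ω : PathSpace => ∑ i ∈ Finset.range n,
        a i * (ω.1 (gridPt n (i + 1)) - ω.1 (gridPt n i))) =
      gaussianReal 0 (Real.toNNReal ((∑ i ∈ Finset.range n, a i ^ 2) / n)) := by
  have h := map_linComb hW (fun p : Fin n × Bool => if p.2 then a p.1 else -a p.1)
    (fun p => if p.2 then gridPt n (p.1 + 1) else gridPt n p.1)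
  have h1 : (fun ω : PathSpace => ∑ p : Fin n × Bool, (if p.2 then a p.1 else -a p.1) *
      ω.1 (if p.2 then gridPt n (p.1 + 1) else gridPt n p.1)) =
      fun ω : PathSpace => ∑ i ∈ Finset.range n,
        a i * (ω.1 (gridPt n (i + 1)) - ω.1 (gridPt n i)) := by
    funext ω
    rw [Fintype.sum_prod_type, ← Fin.sum_univ_eq_sum_range
      (fun i => a i * (ω.1 (gridPt n (i + 1)) - ω.1 (gridPt n i)))]
    refine Finset.sum_congr rfl fun i _ => ?_
    simp
    ring
  rw [h1] at h
  rw [h]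
  congr 2
  rw [wienerCov, Fintype.sum_prod_type, Finset.sum_div,
    ← Fin.sum_univ_eq_sum_range (fun i => a i ^ 2 / (n : ℝ))]
  refine Finset.sum_congr rfl fun i _ => ?_
  have h2 : ∀ j : Fin n, a i * a j * (if (i : ℕ) = j then (1 / n : ℝ) else 0) =
      if i = j then a j ^ 2 / n else 0 := by
    intro j
    by_cases hij : i = j
    · subst hij
      simp
      ring
    · simp [hij, Fin.val_inj]
  trans ∑ j : Fin n, a i * a j * (if (i : ℕ) = j then (1 / n : ℝ) else 0)
  · simp only [Fintype.sum_prod_type, Fintype.sum_bool, ← Finset.sum_add_distrib]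
    refine Finset.sum_congr rfl fun j _ => ?_
    rw [← min_increment hn]
    simp only [if_true, Bool.false_eq_true, if_false, coe_gridPt (Nat.succ_le_iff.2 i.2),
      coe_gridPt (Nat.succ_le_iff.2 j.2), coe_gridPt i.2.le, coe_gridPt j.2.le]
    ring
  · simp_rw [h2]
    simp

lemma wiener_ball_le_exp_Qvar {W : Measure PathSpace} (hW : IsWienerMeasure W) (ω : PathSpace)
    {n : ℕ} (hn : 0 < n) {ε : ℝ} (hε : 0 < ε) (hQ : 4 * ε ≤ Qvar ω n) :
    W.real (ball ω ε) ≤ Real.exp (-(n ^ 2 * Qvar ω n ^ 2 / 8)) := by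
  have := hW.1
  have hn' : (0 : ℝ) < n := by exact_mod_cast hn
  set Q := Qvar ω n with hQdef
  have hQ0 : 0 < Q := by linarith
  set a : ℕ → ℝ := fun i => ω.1 (gridPt n (i + 1)) - ω.1 (gridPt n i) with ha
  have hS : ∑ i ∈ Finset.range n, a i ^ 2 = n * Q ^ 2 := by
    rw [hQdef, Qvar, Real.sq_sqrt (by positivity)]
    field_simp
    rfl
  have hA : ∑ i ∈ Finset.range n, |a i| ≤ n * Q := by
    have h1 := sq_sum_le_card_mul_sum_sq (s := Finset.range n) (f := fun i => |a i|)
    simp only [sq_abs, Finset.card_range, hS] at h1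
    refine abs_le_of_sq_le_sq' (by nlinarith) (by positivity) |>.2
  have hsub : ball ω ε ⊆ (fun ω' : PathSpace => ∑ i ∈ Finset.range n,
      a i * (ω'.1 (gridPt n (i + 1)) - ω'.1 (gridPt n i))) ⁻¹' Ici (n * Q ^ 2 / 2) := by
    intro ω' hω'
    have h2 := mem_ball.1 hω'
    have h3 : ∀ i ∈ Finset.range n, a i ^ 2 - 2 * ε * |a i| ≤
        a i * (ω'.1 (gridPt n (i + 1)) - ω'.1 (gridPt n i)) := by
      intro i _
      have h4 := abs_le.1 (abs_apply_sub_le ω' ω (gridPt n (i + 1)))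
      have h5 := abs_le.1 (abs_apply_sub_le ω' ω (gridPt n i))
      have h6 : |a i * (ω'.1 (gridPt n (i + 1)) - ω'.1 (gridPt n i) - a i)| ≤ |a i| * (2 * ε) := by
        rw [abs_mul]
        gcongr
        rw [abs_le]
        simp only [ha]
        constructor <;> linarith [h4.1, h4.2, h5.1, h5.2]
      have := (abs_le.1 h6).1
      linarith
    have h4 := Finset.sum_le_sum h3
    rw [Finset.sum_sub_distrib, ← Finset.mul_sum, hS] at h4
    refine le_trans ?_ h4
    have h5 := mul_le_mul_of_nonneg_left hA (show 0 ≤ 2 * ε by positivity)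
    nlinarith [mul_le_mul_of_nonneg_right hQ (show 0 ≤ n * Q by positivity)]
  refine (measureReal_mono hsub).trans ?_
  have hmeas : Measurable (fun ω' : PathSpace => ∑ i ∈ Finset.range n,
      a i * (ω'.1 (gridPt n (i + 1)) - ω'.1 (gridPt n i))) :=
    Finset.measurable_sum _ fun i _ =>
      ((measurable_eval _).sub (measurable_eval _)).const_mul _
  rw [← map_measureReal_apply hmeas measurableSet_Ici, map_sum_increments hW hn a, hS]
  refine (gaussianReal_Ici_le _ (by positivity)).trans (le_of_eq ?_)
  rw [Real.coe_toNNReal _ (by positivity)]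
  congr 1
  field_simp
  ring

lemma eventually_rpow_neg_le_Qvar {q p : ℝ} (hq : 0 < q) (hp : q < p) {ω : PathSpace}
    (hω : ω ∈ holderCrit q) : ∀ᶠ n : ℕ in atTop, (n : ℝ) ^ (-p) ≤ Qvar ω n := by
  have h1 : ∀ᶠ n : ℕ in atTop, ((-Real.log (Qvar ω n) / Real.log n : ℝ) : EReal) < (p : ℝ) :=
    eventually_lt_of_limsup_lt (by
      have := hω.2.2
      rw [oreyUpper] at this
      rw [this]
      exact EReal.coe_lt_coe_iff.2 hp)
  have h2 : ∀ᶠ n : ℕ in atTop, ((0 : ℝ) : EReal) < ((-Real.log (Qvar ω n) / Real.log n : ℝ) : EReal) :=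
    eventually_lt_of_lt_liminf (by
      have := hω.2.1
      rw [oreyLower] at this
      rw [this]
      exact EReal.coe_lt_coe_iff.2 hq)
  filter_upwards [h1, h2, eventually_gt_atTop 1] with n h1 h2 hn
  rw [EReal.coe_lt_coe_iff] at h1 h2
  have hn' : (1 : ℝ) < n := by exact_mod_cast hn
  have hQ : 0 < Qvar ω n := by
    refine lt_of_le_of_ne (Real.sqrt_nonneg _) fun h => ?_
    rw [← h] at h2
    simp at h2
  rw [div_lt_iff₀ (Real.log_pos hn')] at h1
  rw [← Real.log_le_log_iff (by positivity) hQ, Real.log_rpow (by linarith)]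
  linarith

lemma wiener_ball_le_of_holderCrit {W : Measure PathSpace} (hW : IsWienerMeasure W) {q η : ℝ}
    (hq : 0 < q) {ω : PathSpace} (hω : ω ∈ holderCrit q) (hη : 0 < η) (hηq : η < 2 / q - 2) :
    ∀ᶠ ε in 𝓝[>] (0 : ℝ), W.real (ball ω ε) ≤ Real.exp (-(ε ^ (-η))) := by
  have h1 : q < 2 / (η + 2) := by
    rw [lt_div_iff₀ (by linarith)]
    have : η + 2 < 2 / q := by linarith
    rw [lt_div_iff₀ hq] at this
    linarith
  obtain ⟨p, hp, hp2⟩ := exists_between h1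
  have hp0 : 0 < p := hq.trans hp
  have hηp : η < 2 / p - 2 := by
    rw [lt_div_iff₀ (by linarith)] at hp2
    have : η + 2 < 2 / p := by
      rw [lt_div_iff₀ hp0]
      linarith
    linarith
  have hp1 : p < 1 := by
    refine hp2.trans_le ?_
    rw [div_le_one (by linarith)]
    linarith
  set c : ℝ := 2⁻¹ * 4 ^ (-(1 / p)) with hc
  have hc0 : 0 < c := by positivity
  have hlim0 : Tendsto (fun ε : ℝ => (4 * ε)) (𝓝[>] 0) (𝓝[>] 0) := by
    refine tendsto_nhdsWithin_iff.2 ⟨?_, ?_⟩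
    · have : Tendsto (fun ε : ℝ => 4 * ε) (𝓝 0) (𝓝 (4 * 0)) :=
        tendsto_id.const_mul 4
      rw [mul_zero] at this
      exact this.mono_left nhdsWithin_le_nhds
    · filter_upwards [self_mem_nhdsWithin] with ε hε
      have : 0 < ε := hε
      exact mem_Ioi.2 (by positivity)
  have hlim : Tendsto (fun ε : ℝ => (4 * ε) ^ (-(1 / p))) (𝓝[>] 0) atTop :=
    (tendsto_rpow_neg_nhdsGT_zero (by simpa using hp0)).comp hlim0
  have hfl : Tendsto (fun ε : ℝ => ⌊(4 * ε) ^ (-(1 / p))⌋₊) (𝓝[>] 0) atTop :=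
    tendsto_nat_floor_atTop.comp hlim
  filter_upwards [hfl.eventually (eventually_rpow_neg_le_Qvar hq hp hω),
    hlim.eventually_ge_atTop 1, self_mem_nhdsWithin,
    eventually_rpow_neg_le (show 0 < c ^ (2 - 2 * p) / 8 by positivity) hηp] with ε hQ h1 hε hcmp
  have hε : 0 < ε := hε
  set X := (4 * ε) ^ (-(1 / p)) with hX
  set n := ⌊X⌋₊ with hn
  have hnX : (n : ℝ) ≤ X := Nat.floor_le (by linarith)
  have hn0 : 0 < n := Nat.floor_pos.2 h1
  have hn' : (0 : ℝ) < n := by exact_mod_cast hn0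
  have hn1 : (1 : ℝ) ≤ n := by exact_mod_cast hn0
  have hnX2 : 2⁻¹ * X ≤ n := by
    have := Nat.lt_floor_add_one X
    linarith
  have h4 : 4 * ε ≤ (n : ℝ) ^ (-p) := by
    calc 4 * ε = X ^ (-p) := by
          rw [hX, ← Real.rpow_mul (by positivity)]
          rw [show -(1 / p) * -p = 1 by field_simp, Real.rpow_one]
      _ ≤ _ := Real.rpow_le_rpow_of_nonpos hn' hnX (by linarith)
  refine (wiener_ball_le_exp_Qvar hW ω hn0 hε (h4.trans hQ)).trans ?_
  gcongr
  refine hcmp.trans ?_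
  have h5 : c ^ (2 - 2 * p) * ε ^ (-(2 / p - 2)) = (2⁻¹ * X) ^ (2 - 2 * p) := by
    rw [hX, Real.mul_rpow (by norm_num) hε.le, ← mul_assoc, ← hc,
      Real.mul_rpow hc0.le (by positivity), ← Real.rpow_mul hε.le]
    congr 2
    field_simp
  have h6 : (2⁻¹ * X) ^ (2 - 2 * p) ≤ (n : ℝ) ^ (2 - 2 * p) :=
    Real.rpow_le_rpow (by positivity) hnX2 (by linarith)
  have h7 : (n : ℝ) ^ (2 - 2 * p) = n ^ 2 * ((n : ℝ) ^ (-p)) ^ 2 := by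
    rw [← Real.rpow_natCast, ← Real.rpow_natCast, ← Real.rpow_mul hn'.le, ← Real.rpow_add hn']
    push_cast
    ring_nf
  have h8 : (n : ℝ) ^ 2 * ((n : ℝ) ^ (-p)) ^ 2 ≤ n ^ 2 * Qvar ω n ^ 2 := by gcongr
  rw [div_mul_eq_mul_div, h5]
  linarith

/-- The indices of the Schauder coefficients of level less than `N`, including the endpoint. -/
def indicesBelow (N : ℕ) : Finset (Option (ℕ × ℕ)) :=
  insert none ((Finset.range N).biUnion levelIndices)

lemma none_mem_indicesBelow (N : ℕ) : none ∈ indicesBelow N := Finset.mem_insert_self _ _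

lemma some_mem_indicesBelow {N k j : ℕ} :
    some (k, j) ∈ indicesBelow N ↔ k < N ∧ j < 2 ^ k := by
  simp only [indicesBelow, Finset.mem_insert, Finset.mem_biUnion, mem_levelIndices,
    Finset.mem_range]
  constructor
  · rintro (h | ⟨k', h1, j', h2, h3⟩)
    · cases h
    · cases h3
      exact ⟨h1, h2⟩
  · rintro ⟨h1, h2⟩
    exact Or.inr ⟨k, h1, j, h2, rfl⟩

lemma sum_indicesBelow (N : ℕ) (g : Option (ℕ × ℕ) → ℝ) :
    ∑ i ∈ indicesBelow N, g i =
      g none + ∑ k ∈ Finset.range N, ∑ j ∈ Finset.range (2 ^ k), g (some (k, j)) := by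
  rw [indicesBelow, Finset.sum_insert, Finset.sum_biUnion]
  · simp [levelIndices]
  · intro k _ k' _ hne
    rw [Function.onFun, Finset.disjoint_left]
    intro i hi hi'
    obtain ⟨j, _, rfl⟩ := mem_levelIndices.1 hi
    obtain ⟨j', _, h⟩ := mem_levelIndices.1 hi'
    cases h
    exact hne rfl
  · simp only [Finset.mem_biUnion, mem_levelIndices]
    rintro ⟨k, _, j, _, h⟩
    cases h

/-- Small boxes for all Schauder coefficients have probability controlled by the sum of the
individual costs. -/
lemma wiener_schauder_ge {W : Measure PathSpace} (hW : IsWienerMeasure W)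
    (S : Option (ℕ × ℕ) → Set ℝ) (hS : ∀ i, MeasurableSet (S i)) (cost : Option (ℕ × ℕ) → ℝ)
    (hcost : ∀ i, IsDyadicIndex i →
      Real.exp (-cost i) ≤ (gaussianReal 0 (schauderVar i).toNNReal).real (S i))
    {B : ℝ} (hB : ∀ N, ∑ i ∈ indicesBelow N, cost i ≤ B) :
    Real.exp (-B) ≤ W.real {ω | ∀ i, IsDyadicIndex i → schauder ω.1 i ∈ S i} := by
  have := hW.1
  have hdy : ∀ N, ∀ i ∈ indicesBelow N, IsDyadicIndex i := by
    intro N i hi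
    rcases i with _ | ⟨k, j⟩
    · trivial
    · exact (some_mem_indicesBelow.1 hi).2
  set A : ℕ → Set PathSpace := fun N => {ω | ∀ i ∈ indicesBelow N, schauder ω.1 i ∈ S i} with hA
  have hAeq : {ω : PathSpace | ∀ i, IsDyadicIndex i → schauder ω.1 i ∈ S i} = ⋂ N, A N := by
    ext ω
    simp only [hA, mem_ofPred_eq, mem_iInter]
    constructor
    · exact fun h N i hi => h i (hdy N i hi)
    · intro h i hi
      rcases i with _ | ⟨k, j⟩
      · exact h 0 _ (none_mem_indicesBelow 0)
      · exact h (k + 1) _ (some_mem_indicesBelow.2 ⟨by omega, hi⟩)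
  have hanti : Antitone A := by
    intro N M hNM ω hω i hi
    refine hω i ?_
    rcases i with _ | ⟨k, j⟩
    · exact none_mem_indicesBelow M
    · have := some_mem_indicesBelow.1 hi
      exact some_mem_indicesBelow.2 ⟨this.1.trans_le hNM, this.2⟩
  have hmeas : ∀ N, MeasurableSet (A N) := by
    intro N
    have : A N = ⋂ i ∈ indicesBelow N, (fun ω : PathSpace => schauder ω.1 i) ⁻¹' S i := by
      ext ω
      simp [hA]
    rw [this]
    exact Finset.measurableSet_biInter _ fun i _ => measurable_linComb _ _ (hS i)
  have hlim : Tendsto (fun N => W.real (A N)) atTop (𝓝 (W.real (⋂ N, A N))) :=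
    (ENNReal.tendsto_toReal (measure_ne_top _ _)).comp
      (tendsto_measure_iInter_atTop (fun N => (hmeas N).nullMeasurableSet) hanti
        ⟨0, measure_ne_top _ _⟩)
  rw [hAeq]
  refine ge_of_tendsto' hlim fun N => ?_
  rw [hA, wiener_schauder_box hW _ (hdy N) S hS]
  calc Real.exp (-B) ≤ Real.exp (∑ i ∈ indicesBelow N, -cost i) := by
        rw [Finset.sum_neg_distrib]
        gcongr
        exact hB N
    _ = ∏ i ∈ indicesBelow N, Real.exp (-cost i) := Real.exp_sum _ _
    _ ≤ _ := Finset.prod_le_prod (fun _ _ => (Real.exp_pos _).le)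
        fun i hi => hcost i (hdy N i hi)

lemma exp_neg_one_le_half : Real.exp (-1) ≤ 1 / 2 := by
  have := Real.add_one_le_exp (1 : ℝ)
  rw [Real.exp_neg, one_div]
  gcongr
  linarith

lemma gaussianReal_Icc_ge_exp {v a M : ℝ} (hv : 0 < v) (hv1 : v ≤ 1) (K : ℕ)
    (hM : (a ^ 2 + ((1 / 2 : ℝ) ^ K) ^ 2) / (2 * v) ≤ M) :
    Real.exp (-(K + 2 + M)) ≤
      (gaussianReal 0 v.toNNReal).real (Icc (a - (1 / 2) ^ K) (a + (1 / 2) ^ K)) := by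
  refine le_trans ?_ (gaussianReal_Icc_ge (by simpa using hv) a (by positivity))
  rw [Real.coe_toNNReal _ hv.le, ← mul_assoc, neg_add, Real.exp_add, neg_div]
  have h1 : Real.exp (-(K + 2 : ℝ)) ≤ (1 / 2) ^ (K + 2) := by
    calc Real.exp (-(K + 2 : ℝ)) = Real.exp (-1) ^ (K + 2) := by
          rw [← Real.exp_nat_mul]
          push_cast
          ring_nf
      _ ≤ _ := by
          gcongr
          exact exp_neg_one_le_half
  have h3 : √(2 * Real.pi * v) ≤ 4 := by
    rw [Real.sqrt_le_left (by norm_num)]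
    have := Real.pi_le_four
    nlinarith [Real.pi_pos]
  have h4 : (0 : ℝ) < √(2 * Real.pi * v) := by positivity
  gcongr
  refine h1.trans ?_
  rw [pow_add]
  gcongr
  rw [show ((1 : ℝ) / 2) ^ 2 = 4⁻¹ by norm_num]
  gcongr

lemma eventually_succ_le_pow {G : ℝ} (hG : 1 < G) : ∀ᶠ k : ℕ in atTop, (k + 1 : ℝ) ≤ G ^ k := by
  have h1 : Tendsto (fun k : ℕ => (k : ℝ) ^ 1 * (1 / G) ^ k + (1 / G) ^ k) atTop (𝓝 (0 + 0)) := by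
    have h2 : |1 / G| < 1 := by
      rw [abs_of_pos (by positivity), div_lt_one (by linarith)]
      exact hG
    exact (tendsto_pow_const_mul_const_pow_of_abs_lt_one 1 h2).add
      (tendsto_pow_atTop_nhds_zero_of_abs_lt_one h2)
  rw [add_zero] at h1
  filter_upwards [h1.eventually_le_const one_pos] with k hk
  have hGk : 0 < G ^ k := by positivity
  rw [pow_one, div_pow, one_pow, mul_one_div, ← add_div, div_le_one hGk] at hk
  exact hk

lemma eventually_exp_le_one_sub {G : ℝ} (hG : 1 < G) :
    ∀ᶠ k : ℕ in atTop, Real.exp (-(1 / 4) ^ k) ≤ 1 - 2 * Real.exp (-(2 * G ^ k)) := by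
  filter_upwards [eventually_succ_le_pow hG] with k hk
  have h1 : Real.exp (-(2 * G ^ k)) ≤ (1 / 4) ^ (k + 1) := by
    calc Real.exp (-(2 * G ^ k)) ≤ Real.exp (-(2 * (k + 1))) := by gcongr
      _ = (Real.exp (-1) ^ 2) ^ (k + 1) := by
          rw [← pow_mul, ← Real.exp_nat_mul]
          push_cast
          ring_nf
      _ ≤ _ := by
          gcongr
          calc Real.exp (-1) ^ 2 ≤ (1 / 2) ^ 2 := by gcongr; exact exp_neg_one_le_half
            _ = 1 / 4 := by norm_num
  set y : ℝ := (1 / 4) ^ k with hy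
  have hy0 : 0 < y := by positivity
  have hy1 : y ≤ 1 := pow_le_one₀ (by norm_num) (by norm_num)
  have h2 : Real.exp (-y) ≤ 1 / (1 + y) := by
    rw [Real.exp_neg, one_div]
    gcongr
    linarith [Real.add_one_le_exp y]
  rw [pow_succ, ← hy] at h1
  refine h2.trans ?_
  rw [div_le_iff₀ (by positivity)]
  nlinarith

lemma eventually_wiener_ball_signPath_ge {W : Measure PathSpace} (hW : IsWienerMeasure W)
    {ρ τ : ℝ} (h0 : 0 < ρ) (h1 : ρ < 1) (hρ : 1 ≤ 2 * ρ ^ 2) (hρτ : ρ < τ) (hτ : τ < 1)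
    (s : ℕ × ℕ → Bool) :
    ∃ C > 0, ∀ᶠ K : ℕ in atTop, Real.exp (-((K + 6) * (2 * (2 * ρ ^ 2)) ^ K + 2)) ≤
      W.real (ball (signPath h0 h1 s) (C * τ ^ K)) := by
  have := hW.1
  have hτ0 : 0 < τ := h0.trans hρτ
  have hG : 1 < 2 * τ ^ 2 := by nlinarith
  have hτ2 : 1 < 2 * τ := by nlinarith
  have hρ2 : 1 / 2 ≤ ρ := by nlinarith
  have h1τ : 0 < 1 - τ := by linarith
  refine ⟨2 + 2 / (1 - τ), by positivity, ?_⟩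
  obtain ⟨K₀, hK₀⟩ := eventually_atTop.1 (eventually_exp_le_one_sub hG)
  filter_upwards [eventually_ge_atTop K₀, eventually_succ_le_pow hτ2] with K hK hK2
  set ω₀ := signPath h0 h1 s with hω₀
  set D := 2 * ρ ^ 2 with hD
  have hDK : 1 ≤ D ^ K := one_le_pow₀ hρ
  -- the box of each coefficient, and its cost
  set S : Option (ℕ × ℕ) → Set ℝ := fun i => match i with
    | none => Icc (0 - (1 / 2) ^ K) (0 + (1 / 2) ^ K)
    | some (k, j) => if k < K then Icc (schauder ω₀.1 (some (k, j)) - (1 / 2) ^ K)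
        (schauder ω₀.1 (some (k, j)) + (1 / 2) ^ K) else Icc (-τ ^ k) (τ ^ k) with hS
  set M : ℝ := K + 2 + 4 * D ^ K with hM
  have hM0 : 0 ≤ M := by positivity
  set cost : Option (ℕ × ℕ) → ℝ := fun i => match i with
    | none => M
    | some (k, _) => if k < K then M else (1 / 4) ^ k with hcost
  have hprob := wiener_schauder_ge hW S ?_ cost ?_ (B := (K + 6) * (2 * D) ^ K + 2) ?_
  · refine hprob.trans (measureReal_mono ?_)
    intro ω hω
    set e : ℕ → ℝ := fun k => if k < K then (1 / 2) ^ K else 2 * τ ^ k with he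
    have hsum : ∀ N, (1 / 2) ^ K + ∑ k ∈ Finset.range N, e k ≤
        (K + 1) * (1 / 2) ^ K + 2 * (τ ^ K / (1 - τ)) := by
      intro N
      have h3 : ∀ k ∈ Finset.range N, e k =
          (if k < K then (1 / 2) ^ K else 0) + 2 * (if K ≤ k then τ ^ k else 0) := by
        intro k _
        simp only [he]
        split_ifs <;> first | omega | ring
      have h4 : ∑ k ∈ Finset.range N, (if k < K then (1 / 2 : ℝ) ^ K else 0) ≤ K * (1 / 2) ^ K := by
        rw [← Finset.sum_filter]
        refine (Finset.sum_le_sum_of_subset_of_nonneg (t := Finset.range K) ?_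
          fun _ _ _ => by positivity).trans (by simp)
        intro k hk
        simpa using (Finset.mem_filter.1 hk).2
      have h5 : ∑ k ∈ Finset.range N, (if K ≤ k then τ ^ k else 0) ≤ τ ^ K / (1 - τ) := by
        rw [← Finset.sum_filter]
        refine (Finset.sum_le_sum_of_subset_of_nonneg (t := Finset.Ico K N) ?_
          fun _ _ _ => by positivity).trans (geom_sum_Ico_le_of_lt_one hτ0.le hτ)
        intro k hk
        have := Finset.mem_filter.1 hk
        exact Finset.mem_Ico.2 ⟨this.2, Finset.mem_range.1 this.1⟩
      rw [Finset.sum_congr rfl h3, Finset.sum_add_distrib, ← Finset.mul_sum]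
      linarith
    have hdist : dist ω ω₀ ≤ (K + 1) * (1 / 2) ^ K + 2 * (τ ^ K / (1 - τ)) := by
      refine (ContinuousMap.dist_le (by positivity)).2 fun t => ?_
      rw [Real.dist_eq]
      refine abs_le_of_schauder_le (f := fun t => ω.1 t - ω₀.1 t) (by fun_prop)
        (by simp [ω.2, ω₀.2]) (c := (1 / 2) ^ K) (e := e) ?_ ?_ ?_ hsum t
      · intro k
        simp only [he]
        split_ifs <;> positivity
      · rw [schauder_sub, hω₀, schauder_signPath_none, sub_zero, abs_le]
        have := hω none trivial
        simp only [hS] at this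
        exact ⟨by linarith [this.1], by linarith [this.2]⟩
      · intro k j hj
        rw [schauder_sub]
        have h3 := hω (some (k, j)) hj
        simp only [hS] at h3
        by_cases hk : k < K
        · rw [if_pos hk] at h3
          simp only [he, if_pos hk]
          rw [abs_le]
          exact ⟨by linarith [h3.1], by linarith [h3.2]⟩
        · rw [if_neg hk] at h3
          simp only [he, if_neg hk]
          have h4 : |schauder ω₀.1 (some (k, j))| ≤ τ ^ k := by
            rw [hω₀, schauder_signPath_some h0 h1 s hj, abs_mul, abs_boolSign, mul_one,
              abs_of_pos (by positivity)]
            gcongr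
          have h5 := abs_sub (schauder ω.1 (some (k, j))) (schauder ω₀.1 (some (k, j)))
          have h6 := abs_le.2 h3
          linarith
    have h3 : (K + 1) * (1 / 2 : ℝ) ^ K ≤ τ ^ K := by
      rw [mul_pow] at hK2
      rw [one_div, inv_pow, ← div_eq_mul_inv, div_le_iff₀ (by positivity)]
      linarith
    refine mem_ball.2 (hdist.trans_lt ?_)
    have h4 : 0 < τ ^ K := by positivity
    calc (K + 1) * (1 / 2) ^ K + 2 * (τ ^ K / (1 - τ)) ≤ τ ^ K + 2 * (τ ^ K / (1 - τ)) := by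
          gcongr
      _ < 2 * τ ^ K + 2 * (τ ^ K / (1 - τ)) := by linarith
      _ = _ := by ring
  · intro i
    rcases i with _ | ⟨k, j⟩
    · exact measurableSet_Icc
    · simp only [hS]
      split_ifs <;> exact measurableSet_Icc
  · intro i hi
    rcases i with _ | ⟨k, j⟩
    · refine gaussianReal_Icc_ge_exp (schauderVar_pos _) le_rfl K ?_
      simp only [schauderVar]
      have : ((1 / 2 : ℝ) ^ K) ^ 2 ≤ 1 :=
        pow_le_one₀ (by positivity) (pow_le_one₀ (by norm_num) (by norm_num))
      linarith
    · have hj : j < 2 ^ k := hi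
      by_cases hk : k < K
      · simp only [hS, hcost, if_pos hk]
        refine gaussianReal_Icc_ge_exp (schauderVar_pos _) ?_ K ?_
        · simp only [schauderVar]
          rw [div_le_one (by positivity)]
          exact one_le_pow₀ (by norm_num)
        · rw [hω₀, schauder_signPath_some h0 h1 s hj, mul_pow, ← sq_abs (boolSign _), abs_boolSign]
          have h3 : (1 / 2 : ℝ) ^ K ≤ ρ ^ k :=
            (pow_le_pow_of_le_one (by norm_num) (by norm_num) hk.le).trans (by gcongr)
          have h4 : ((1 / 2 : ℝ) ^ K) ^ 2 ≤ (ρ ^ k) ^ 2 := by gcongr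
          have h5 : D ^ k ≤ D ^ K := pow_le_pow_right₀ hρ hk.le
          have h6 : D ^ k = 2 ^ k * (ρ ^ k) ^ 2 := by rw [hD, mul_pow]; ring
          simp only [schauderVar]
          rw [div_le_iff₀ (by positivity), pow_add]
          have h7 := mul_le_mul_of_nonneg_right h4 (show (0 : ℝ) ≤ 2 ^ k by positivity)
          field_simp
          nlinarith
      · simp only [hS, hcost, if_neg hk]
        refine (hK₀ k (by omega)).trans
          (le_trans (le_of_eq ?_) (gaussianReal_Icc_ge_one_sub _ (by positivity)))
        rw [Real.coe_toNNReal _ (schauderVar_pos _).le]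
        simp only [schauderVar]
        congr 3
        rw [neg_div]
        congr 1
        field_simp
        ring
  · intro N
    rw [sum_indicesBelow]
    simp only [hcost, Finset.sum_const, Finset.card_range, nsmul_eq_mul]
    have h3 : ∀ k ∈ Finset.range N, ((2 ^ k : ℕ) : ℝ) * (if k < K then M else (1 / 4) ^ k) ≤
        (if k < K then 2 ^ k * M else 0) + (1 / 2) ^ k := by
      intro k _
      push_cast
      split_ifs
      · have : (0 : ℝ) ≤ (1 / 2) ^ k := by positivity
        linarith
      · rw [zero_add, ← mul_pow]
        norm_num
    have h4 : ∑ k ∈ Finset.range N, (if k < K then 2 ^ k * M else 0) ≤ (2 ^ K - 1) * M := by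
      calc ∑ k ∈ Finset.range N, (if k < K then 2 ^ k * M else 0)
          = ∑ k ∈ (Finset.range N).filter (· < K), 2 ^ k * M := (Finset.sum_filter _ _).symm
        _ ≤ ∑ k ∈ Finset.range K, 2 ^ k * M := by
            refine Finset.sum_le_sum_of_subset_of_nonneg ?_ fun _ _ _ => by positivity
            intro k hk
            simpa using (Finset.mem_filter.1 hk).2
        _ = (2 ^ K - 1) * M := by
            rw [← Finset.sum_mul, geom_sum_eq (by norm_num)]
            norm_num
    have h5 := Finset.sum_le_sum h3
    rw [Finset.sum_add_distrib] at h5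
    have h6 := sum_geometric_two_le N
    have h7 : M ≤ (K + 6) * D ^ K := by
      rw [hM]
      have : (0 : ℝ) ≤ K := by positivity
      nlinarith
    have h8 : 2 ^ K * M ≤ (K + 6) * (2 * D) ^ K := by
      rw [mul_pow]
      nlinarith [show (0 : ℝ) < 2 ^ K by positivity]
    linarith

lemma eventually_mul_pow_le {A b c : ℝ} (hA : 1 ≤ A) (hAb : A < b) (hc : 0 < c) :
    ∀ᶠ n : ℕ in atTop, (((n + 1 : ℕ) : ℝ) + 6) * A ^ (n + 1) + 2 ≤ c * b ^ n := by
  have hA0 : 0 < A := by linarith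
  have hb : 0 < b := by linarith
  have h1 : |A / b| < 1 := by
    rw [abs_of_pos (by positivity), div_lt_one hb]
    exact hAb
  have h2 : |1 / b| < 1 := by
    rw [abs_of_pos (by positivity), div_lt_one hb]
    linarith
  have hlim : Tendsto (fun n : ℕ => A * ((n : ℝ) ^ 1 * (A / b) ^ n) + 7 * A * (A / b) ^ n +
      2 * (1 / b) ^ n) atTop (𝓝 (A * 0 + 7 * A * 0 + 2 * 0)) :=
    (((tendsto_pow_const_mul_const_pow_of_abs_lt_one 1 h1).const_mul A).add
      ((tendsto_pow_atTop_nhds_zero_of_abs_lt_one h1).const_mul (7 * A))).add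
      ((tendsto_pow_atTop_nhds_zero_of_abs_lt_one h2).const_mul 2)
  simp only [mul_zero, add_zero] at hlim
  filter_upwards [hlim.eventually_le_const hc] with n hn
  have hbn : 0 < b ^ n := by positivity
  calc (((n + 1 : ℕ) : ℝ) + 6) * A ^ (n + 1) + 2
      = (A * ((n : ℝ) ^ 1 * (A / b) ^ n) + 7 * A * (A / b) ^ n + 2 * (1 / b) ^ n) * b ^ n := by
        rw [div_pow, div_pow, one_pow]
        push_cast
        field_simp
        ring
    _ ≤ _ := by gcongr

lemma wiener_ball_critPath_ge {W : Measure PathSpace} (hW : IsWienerMeasure W) {q η : ℝ}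
    (hq : 0 < q) (hq2 : q ≤ 1 / 2) (hη : 2 / q - 2 < η) (s : ℕ × ℕ → Bool) :
    ∀ᶠ ε in 𝓝[>] (0 : ℝ), Real.exp (-(ε ^ (-η))) ≤ W.real (ball (critPath hq s) ε) := by
  have := hW.1
  have hη0 : 0 < η := by
    refine lt_of_le_of_lt ?_ hη
    rw [sub_nonneg, le_div_iff₀ hq]
    linarith
  have hlt : max 0 ((2 - 2 * q) / η) < q := by
    refine max_lt hq ?_
    rw [div_lt_iff₀ hη0]
    have : 2 / q < η + 2 := by linarith
    rw [div_lt_iff₀ hq] at this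
    linarith
  obtain ⟨θ, hθ, hθq⟩ := exists_between hlt
  have hθ0 : 0 < θ := (le_max_left _ _).trans_lt hθ
  have hθη : 2 - 2 * q < θ * η := by
    have := (le_max_right _ _).trans_lt hθ
    rwa [div_lt_iff₀ hη0] at this
  set τ : ℝ := 2 ^ (-θ) with hτ
  have hτ0 : 0 < τ := two_rpow_neg_pos θ
  have hτ1 : τ < 1 := two_rpow_neg_lt_one hθ0
  have hρτ : (2 : ℝ) ^ (-q) < τ := Real.rpow_lt_rpow_of_exponent_lt one_lt_two (by linarith)
  have hρ2 : 2 * ((2 : ℝ) ^ (-q)) ^ 2 = 2 ^ (1 - 2 * q) := by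
    rw [← Real.rpow_natCast, ← Real.rpow_mul (by norm_num), sub_eq_add_neg,
      Real.rpow_add two_pos, Real.rpow_one]
    push_cast
    ring_nf
  have hρ1 : 1 ≤ 2 * ((2 : ℝ) ^ (-q)) ^ 2 := by
    rw [hρ2]
    exact Real.one_le_rpow (by norm_num) (by linarith)
  obtain ⟨C, hC, hball⟩ := eventually_wiener_ball_signPath_ge hW (two_rpow_neg_pos q)
    (two_rpow_neg_lt_one hq) hρ1 hρτ hτ1 s
  set A : ℝ := 2 * (2 * ((2 : ℝ) ^ (-q)) ^ 2) with hA
  have hA2 : A = 2 ^ (2 - 2 * q) := by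
    rw [hA, hρ2, show 2 - 2 * q = 1 + (1 - 2 * q) by ring, Real.rpow_add two_pos, Real.rpow_one]
  have hτη : τ ^ (-η) = 2 ^ (θ * η) := by
    rw [hτ, ← Real.rpow_mul (by norm_num)]
    ring_nf
  have hAb : A < τ ^ (-η) := by
    rw [hA2, hτη]
    exact Real.rpow_lt_rpow_of_exponent_lt one_lt_two hθη
  obtain ⟨N₁, hN₁⟩ := eventually_atTop.1 hball
  obtain ⟨N₂, hN₂⟩ := eventually_atTop.1
    (eventually_mul_pow_le (by linarith) hAb (show 0 < C ^ (-η) by positivity))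
  have hδ : 0 < C * τ ^ (max N₁ N₂ + 1) := by positivity
  filter_upwards [eventually_mem_Ioo_nhdsGT hδ] with ε hε
  have hε0 := hε.1
  have hx : ε / C < τ ^ (max N₁ N₂ + 1) := by
    rw [div_lt_iff₀ hC]
    linarith [hε.2]
  obtain ⟨n, hn1, hn2⟩ := exists_nat_pow_near_of_lt_one (x := ε / C) (by positivity)
    (hx.le.trans (pow_le_one₀ hτ0.le hτ1.le)) hτ0 hτ1
  have hn : max N₁ N₂ + 1 < n + 1 := (pow_lt_pow_iff_right_of_lt_one₀ hτ0 hτ1).1 (hn1.trans hx)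
  have hnN₁ : N₁ ≤ n + 1 := by have := le_max_left N₁ N₂; omega
  have hnN₂ : N₂ ≤ n := by have := le_max_right N₁ N₂; omega
  rw [lt_div_iff₀ hC] at hn1
  rw [div_le_iff₀ hC] at hn2
  refine le_trans ?_ ((hN₁ (n + 1) hnN₁).trans
    (measureReal_mono (ball_subset_ball (by linarith))))
  gcongr
  refine (hN₂ n hnN₂).trans ?_
  have h1 : C ^ (-η) * (τ ^ (-η)) ^ n = (τ ^ n * C) ^ (-η) := by
    rw [Real.mul_rpow (by positivity) hC.le, ← Real.rpow_natCast, ← Real.rpow_natCast,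
      ← Real.rpow_mul hτ0.le, ← Real.rpow_mul hτ0.le]
    ring_nf
  rw [h1]
  exact Real.rpow_le_rpow_of_nonpos hε0 hn2 (by linarith)

lemma critPath_mem_levelOrd {W : Measure PathSpace} (hW : IsWienerMeasure W) {q : ℝ}
    (hq : 0 < q) (hq2 : q ≤ 1 / 2) (s : ℕ × ℕ → Bool) :
    critPath hq s ∈ levelOrd W (2 / q - 2) := by
  have := hW.1
  refine mem_levelOrd ?_ (fun η hη hlt => ?_) fun η hη => wiener_ball_critPath_ge hW hq hq2 hη s
  · have : 4 ≤ 2 / q := by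
      rw [le_div_iff₀ hq]
      linarith
    linarith
  · exact wiener_ball_le_of_holderCrit hW hq
      (critPath_mem_holderCrit hq (by linarith) s) hη hlt

lemma hMeasAux_mono {X : Type*} [MetricSpace X] (h : ℝ → ℝ) (δ : ℝ≥0∞) {E F : Set X}
    (hEF : E ⊆ F) : hMeasAux h δ E ≤ hMeasAux h δ F := by
  refine le_iInf₂ fun c r => le_iInf₂ fun hr hF => ?_
  exact iInf₂_le_of_le c r (iInf₂_le_of_le hr (hEF.trans hF) le_rfl)

lemma hMeas_mono {X : Type*} [MetricSpace X] (h : ℝ → ℝ) {E F : Set X} (hEF : E ⊆ F) :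
    hMeas h E ≤ hMeas h F :=
  iSup₂_mono fun δ _ => hMeasAux_mono h δ hEF

lemma ordH_mono {A B : Set PathSpace} (hAB : A ⊆ B) : ordH A ≤ ordH B :=
  iSup₂_le fun α hα => le_iSup₂_of_le α
    ⟨hα.1, top_le_iff.1 (hα.2.symm.le.trans (hMeas_mono _ hAB))⟩ le_rfl

/-- Mass distribution principle. -/
lemma hMeas_eq_top_of_mass {X Y : Type*} [MetricSpace X] [MeasurableSpace Y] (ν : Measure Y)
    [IsProbabilityMeasure ν] (φ : Y → X) (h : ℝ → ℝ)
    (hν : ∀ M : ℕ, ∀ᶠ r in 𝓝[>] (0 : ℝ), ∀ x : X,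
      (M : ℝ≥0∞) * ν (φ ⁻¹' ball x r) ≤ ENNReal.ofReal (h r)) :
    hMeas h (range φ) = ∞ := by
  refine ENNReal.eq_top_of_forall_nnreal_le fun M' => ?_
  obtain ⟨M, hM⟩ := exists_nat_ge M'
  have hMM : (M' : ℝ≥0∞) ≤ M := by exact_mod_cast hM
  refine hMM.trans ?_
  obtain ⟨δ, hδ, hδ'⟩ := mem_nhdsGT_iff_exists_Ioc_subset.1 (hν M)
  have hδ : 0 < δ := hδ
  refine le_iSup₂_of_le (ENNReal.ofReal δ) (ENNReal.ofReal_pos.2 hδ) ?_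
  refine le_iInf₂ fun c r => le_iInf₂ fun hr hcov => ?_
  have hun : (univ : Set Y) ⊆ ⋃ n, φ ⁻¹' ball (c n) (r n) := by
    intro y _
    rw [← preimage_iUnion]
    exact hcov (mem_range_self y)
  calc (M : ℝ≥0∞) = M * ν univ := by rw [measure_univ, mul_one]
    _ ≤ M * ∑' n, ν (φ ⁻¹' ball (c n) (r n)) := by
        gcongr
        exact (measure_mono hun).trans (measure_iUnion_le _)
    _ = ∑' n, M * ν (φ ⁻¹' ball (c n) (r n)) := ENNReal.tsum_mul_left.symm
    _ ≤ _ := ENNReal.tsum_le_tsum fun n =>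
        hδ' ⟨(hr n).1, (ENNReal.ofReal_le_ofReal_iff hδ.le).1 (hr n).2⟩ (c n)

/-- The law of a fair coin. -/
def coin : Measure Bool := (PMF.uniformOfFintype Bool).toMeasure

instance : IsProbabilityMeasure coin := PMF.toMeasure.isProbabilityMeasure _

lemma coin_singleton (b : Bool) : coin {b} = 1 / 2 := by
  rw [coin, PMF.toMeasure_apply_singleton _ _ (measurableSet_singleton b)]
  simp

/-- The law of a field of independent fair coins. -/
def coinField : Measure (ℕ × ℕ → Bool) := Measure.infinitePi fun _ => coin

instance : IsProbabilityMeasure coinField := by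
  rw [coinField]
  infer_instance

lemma signPath_sign_eq {ρ : ℝ} (h0 : 0 < ρ) (h1 : ρ < 1) {s s' : ℕ × ℕ → Bool} {x : PathSpace}
    {r : ℝ} {k j : ℕ} (hr : 2 * r ≤ ρ ^ k) (hj : j < 2 ^ k)
    (hs : signPath h0 h1 s ∈ ball x r) (hs' : signPath h0 h1 s' ∈ ball x r) :
    s (k, j) = s' (k, j) := by
  by_contra hne
  have h2 : dist (signPath h0 h1 s) (signPath h0 h1 s') < r + r :=
    (dist_triangle_right _ _ x).trans_lt (add_lt_add hs hs')
  have h3 := abs_schauder_sub_le (signPath h0 h1 s) (signPath h0 h1 s') k j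
  rw [schauder_signPath_some h0 h1 s hj, schauder_signPath_some h0 h1 s' hj, ← mul_sub, abs_mul,
    abs_of_pos (show 0 < ρ ^ k by positivity)] at h3
  have h4 : |boolSign (s (k, j)) - boolSign (s' (k, j))| = 2 := by
    cases h5 : s (k, j) <;> cases h6 : s' (k, j) <;> simp_all [boolSign] <;> norm_num
  rw [h4] at h3
  linarith

lemma coinField_preimage_ball_le {ρ : ℝ} (h0 : 0 < ρ) (h1 : ρ < 1) (x : PathSpace) {r : ℝ} {k : ℕ}
    (hr : 2 * r ≤ ρ ^ k) :
    coinField (signPath h0 h1 ⁻¹' ball x r) ≤ (1 / 2) ^ 2 ^ k := by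
  rcases (signPath h0 h1 ⁻¹' ball x r).eq_empty_or_nonempty with he | ⟨s₀, hs₀⟩
  · simp [he]
  set F : Finset (ℕ × ℕ) := (Finset.range (2 ^ k)).map (Function.Embedding.sectR k ℕ) with hF
  have hsub : signPath h0 h1 ⁻¹' ball x r ⊆ Set.pi F fun i => {s₀ i} := by
    intro s hs i hi
    simp only [hF, Finset.coe_map, Finset.coe_range, mem_image, mem_Iio] at hi
    obtain ⟨j, hj, rfl⟩ := hi
    exact signPath_sign_eq h0 h1 hr hj hs hs₀
  refine (measure_mono hsub).trans (le_of_eq ?_)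
  rw [coinField, Measure.infinitePi_pi _ fun i _ => measurableSet_singleton _]
  simp [coin_singleton, hF]

lemma hMeas_range_critPath {q α : ℝ} (hq : 0 < q) (hα : 0 < α) (hαq : α < 1 / q) :
    hMeas (fun ε : ℝ => Real.exp (-(ε ^ (-α)))) (range (critPath hq)) = ∞ := by
  refine hMeas_eq_top_of_mass coinField (critPath hq) _ fun M => ?_
  set ρ : ℝ := 2 ^ (-q) with hρ
  have hρ0 : 0 < ρ := two_rpow_neg_pos q
  have hρ1 : ρ < 1 := two_rpow_neg_lt_one hq
  set c : ℝ := 2⁻¹ * 2⁻¹ * 2 ^ (-(1 / q)) with hc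
  have hlim : Tendsto (fun r : ℝ => r ^ (-α)) (𝓝[>] 0) atTop :=
    tendsto_rpow_neg_nhdsGT_zero (by linarith)
  filter_upwards [eventually_rpow_neg_le (show 0 < c / 2 by positivity) hαq,
    hlim.eventually_ge_atTop (Real.log M),
    eventually_mem_Ioo_nhdsGT (show (0 : ℝ) < 1 / 2 by norm_num)] with r h1 h2 h3 x
  have hr := h3.1
  obtain ⟨k, hk1, hk2⟩ := exists_nat_pow_near_of_lt_one (x := 2 * r) (by positivity)
    (by linarith [h3.2]) hρ0 hρ1
  have h4 : (2 * r) ^ (-(1 / q)) ≤ 2 ^ (k + 1) := by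
    refine (Real.rpow_le_rpow_of_nonpos (by positivity) hk1.le
      (by simp [hq.le])).trans (le_of_eq ?_)
    rw [hρ, ← Real.rpow_natCast, ← Real.rpow_mul (by positivity), ← Real.rpow_mul (by positivity),
      ← Real.rpow_natCast]
    congr 1
    field_simp
  have h5 : c * r ^ (-(1 / q)) ≤ Real.log 2 * 2 ^ k := by
    rw [Real.mul_rpow (by norm_num) hr.le, pow_succ] at h4
    have := Real.log_two_gt_d9
    have h6 : (0 : ℝ) < 2 ^ k := by positivity
    rw [hc]
    nlinarith
  have h6 : (M : ℝ) * (1 / 2) ^ 2 ^ k ≤ Real.exp (-(r ^ (-α))) := by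
    rcases Nat.eq_zero_or_pos M with rfl | hM
    · simp [Real.exp_nonneg]
    have hM : (0 : ℝ) < M := by exact_mod_cast hM
    rw [← Real.log_le_iff_le_exp (by positivity), Real.log_mul (by positivity) (by positivity),
      Real.log_pow, one_div, Real.log_inv]
    push_cast
    linarith
  calc (M : ℝ≥0∞) * coinField (critPath hq ⁻¹' ball x r) ≤ M * (1 / 2) ^ 2 ^ k := by
        gcongr
        exact coinField_preimage_ball_le hρ0 hρ1 x hk2
    _ = ENNReal.ofReal (M * (1 / 2) ^ 2 ^ k) := by
        rw [ENNReal.ofReal_mul (by positivity), ENNReal.ofReal_natCast,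
          ENNReal.ofReal_pow (by norm_num), ENNReal.ofReal_div_of_pos two_pos]
        simp
    _ ≤ _ := ENNReal.ofReal_le_ofReal h6

lemma le_ordH_of_range_critPath_subset {q : ℝ} (hq : 0 < q) {A : Set PathSpace}
    (hA : range (critPath hq) ⊆ A) : ENNReal.ofReal (1 / q) ≤ ordH A := by
  refine le_of_forall_lt fun c hc => ?_
  have hc' : c.toReal < 1 / q := (ENNReal.lt_ofReal_iff_toReal_lt hc.ne_top).1 hc
  obtain ⟨α, h1, h2⟩ := exists_between hc'
  have hα : 0 < α := ENNReal.toReal_nonneg.trans_lt h1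
  refine ((ENNReal.lt_ofReal_iff_toReal_lt hc.ne_top).2 h1).trans_le
    (le_iSup₂_of_le α ⟨hα, ?_⟩ le_rfl)
  exact top_le_iff.1 ((hMeas_range_critPath hq hα h2).symm.le.trans (hMeas_mono _ hA))

lemma hMeasAux_le_of_finite_covers {X : Type*} [MetricSpace X] (h : ℝ → ℝ) {δ : ℝ≥0∞} {E : Set X}
    (T : ℕ → Type) [∀ m, Fintype (T m)] [∀ m, Nonempty (T m)] (c : ∀ m, T m → X) (r : ℕ → ℝ)
    (hr : ∀ m, 0 < r m ∧ ENNReal.ofReal (r m) ≤ δ) (hE : E ⊆ ⋃ m, ⋃ i, ball (c m i) (r m)) :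
    hMeasAux h δ E ≤ ∑' m, (Fintype.card (T m) : ℝ≥0∞) * ENNReal.ofReal (h (r m)) := by
  have : Infinite (Σ m, T m) :=
    Infinite.of_injective (fun m : ℕ => (⟨m, Classical.arbitrary (T m)⟩ : Σ m, T m))
      fun a b hab => congrArg Sigma.fst hab
  obtain ⟨_⟩ := nonempty_denumerable (Σ m, T m)
  let e := (Denumerable.eqv (Σ m, T m)).symm
  refine (iInf₂_le_of_le (fun n => c (e n).1 (e n).2) (fun n => r (e n).1)
    (iInf₂_le_of_le (fun n => hr _) ?_ le_rfl)).trans ?_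
  · intro x hx
    obtain ⟨m, hm⟩ := mem_iUnion.1 (hE hx)
    obtain ⟨i, hi⟩ := mem_iUnion.1 hm
    obtain ⟨n, hn⟩ := e.surjective ⟨m, i⟩
    refine mem_iUnion.2 ⟨n, ?_⟩
    change x ∈ ball (c (e n).1 (e n).2) (r (e n).1)
    rw [hn]
    exact hi
  · rw [e.tsum_eq fun p : Σ m, T m => ENNReal.ofReal (h (r p.1)),
      ENNReal.tsum_sigma fun m (_ : T m) => ENNReal.ofReal (h (r m))]
    refine ENNReal.tsum_le_tsum fun m => le_of_eq ?_
    simp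

lemma abs_lt_of_floor_eq {x y r : ℝ} (hr : 0 < r) (h : ⌊x / r⌋ = ⌊y / r⌋) : |x - y| < r := by
  have h1 := Int.abs_sub_lt_one_of_floor_eq_floor h
  rwa [← sub_div, abs_div, abs_of_pos hr, div_lt_one hr] at h1

lemma dist_lt_of_floor_eq {b C : ℝ} (hb : 0 < b) (hC : 0 < C) {n : ℕ} (hn : 0 < n)
    {ω ω' : PathSpace}
    (h : ∀ x y : unitInterval, |ω.1 x - ω.1 y| ≤ C * |(x : ℝ) - (y : ℝ)| ^ b)
    (h' : ∀ x y : unitInterval, |ω'.1 x - ω'.1 y| ≤ C * |(x : ℝ) - (y : ℝ)| ^ b)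
    (hfl : ∀ i ≤ n, ⌊ω.1 (gridPt n i) / (C * (n : ℝ) ^ (-b))⌋ =
      ⌊ω'.1 (gridPt n i) / (C * (n : ℝ) ^ (-b))⌋) :
    dist ω ω' < 4 * (C * (n : ℝ) ^ (-b)) := by
  have hn' : (0 : ℝ) < n := by exact_mod_cast hn
  set r := C * (n : ℝ) ^ (-b) with hr
  have hr0 : 0 < r := by positivity
  refine lt_of_le_of_lt ((ContinuousMap.dist_le (C := 3 * r) (by positivity)).2 fun t => ?_)
    (by linarith)
  rw [Real.dist_eq]
  set i := ⌊(t : ℝ) * n⌋₊ with hi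
  have ht0 := t.2.1
  have ht1 := t.2.2
  have hin : i ≤ n := by
    refine Nat.floor_le_of_le ?_
    nlinarith
  have hdist : |(t : ℝ) - gridPt n i| ≤ (n : ℝ)⁻¹ := by
    rw [coe_gridPt hin]
    have h1 := Nat.floor_le (show 0 ≤ (t : ℝ) * n by positivity)
    have h2 := Nat.lt_floor_add_one ((t : ℝ) * n)
    rw [← hi] at h1 h2
    rw [show (t : ℝ) - i / n = (t * n - i) / n by field_simp, abs_div, abs_of_pos hn',
      div_eq_mul_inv, abs_of_nonneg (by linarith)]
    exact mul_le_of_le_one_left (by positivity) (by linarith)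
  have hpow : C * |(t : ℝ) - gridPt n i| ^ b ≤ r := by
    rw [hr, Real.rpow_neg hn'.le, ← Real.inv_rpow hn'.le]
    gcongr
  have h1 := abs_le.1 ((h t (gridPt n i)).trans hpow)
  have h2 := abs_le.1 ((h' t (gridPt n i)).trans hpow)
  have h3 := abs_lt.1 (abs_lt_of_floor_eq hr0 (hfl i hin))
  change |ω.1 t - ω'.1 t| ≤ _
  rw [abs_le]
  constructor <;> linarith [h1.1, h1.2, h2.1, h2.2, h3.1, h3.2]

/-- The set of paths with Hölder constant `C`. -/
def holderBall (b C : ℝ) : Set PathSpace :=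
  {ω | ∀ x y : unitInterval, |ω.1 x - ω.1 y| ≤ C * |(x : ℝ) - (y : ℝ)| ^ b}

lemma floor_mem_Icc_of_holder {b C : ℝ} (hb : 0 < b) (hb1 : b ≤ 1) (hC : 0 < C) {n : ℕ}
    (hn : 0 < n) {ω : PathSpace} (hω : ω ∈ holderBall b C) (t : unitInterval) :
    ⌊ω.1 t / (C * (n : ℝ) ^ (-b))⌋ ∈ Finset.Icc (-(n : ℤ)) n := by
  have hn' : (0 : ℝ) < n := by exact_mod_cast hn
  have hn1 : (1 : ℝ) ≤ n := by exact_mod_cast hn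
  have h1 : |ω.1 t| ≤ C := by
    have h2 := hω t 0
    rw [ω.2, sub_zero] at h2
    refine h2.trans (mul_le_of_le_one_right hC.le (Real.rpow_le_one (abs_nonneg _) ?_ hb.le))
    simpa [abs_of_nonneg t.2.1] using t.2.2
  have h3 : |ω.1 t / (C * (n : ℝ) ^ (-b))| ≤ n := by
    rw [abs_div, abs_of_pos (show 0 < C * (n : ℝ) ^ (-b) by positivity),
      div_le_iff₀ (by positivity)]
    have h4 : (1 : ℝ) ≤ n * (n : ℝ) ^ (-b) := by
      calc (1 : ℝ) ≤ (n : ℝ) ^ (1 - b) := Real.one_le_rpow hn1 (by linarith)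
        _ = n * (n : ℝ) ^ (-b) := by rw [sub_eq_add_neg, Real.rpow_add hn', Real.rpow_one]
    nlinarith
  have h4 := abs_le.1 h3
  rw [Finset.mem_Icc]
  refine ⟨Int.le_floor.2 (by push_cast; exact h4.1), ?_⟩
  have := (Int.floor_le _).trans h4.2
  exact_mod_cast this

lemma exists_cover_holderBall {b C : ℝ} (hb : 0 < b) (hb1 : b ≤ 1) (hC : 0 < C) {n : ℕ}
    (hn : 0 < n) :
    ∃ c : (Fin (n + 1) → Finset.Icc (-(n : ℤ)) n) → PathSpace,
      holderBall b C ⊆ ⋃ v, ball (c v) (4 * (C * (n : ℝ) ^ (-b))) := by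
  have hex : ∀ v : Fin (n + 1) → Finset.Icc (-(n : ℤ)) n, ∃ x : PathSpace,
      ∀ ω ∈ holderBall b C,
        (∀ i : Fin (n + 1), ⌊ω.1 (gridPt n i) / (C * (n : ℝ) ^ (-b))⌋ = v i) →
        dist ω x < 4 * (C * (n : ℝ) ^ (-b)) := by
    intro v
    by_cases hv : ∃ x ∈ holderBall b C,
      ∀ i : Fin (n + 1), ⌊x.1 (gridPt n i) / (C * (n : ℝ) ^ (-b))⌋ = v i
    · obtain ⟨x, hx, hxv⟩ := hv
      exact ⟨x, fun ω hω h => dist_lt_of_floor_eq hb hC hn hω hx fun i hi =>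
        (h ⟨i, by omega⟩).trans (hxv ⟨i, by omega⟩).symm⟩
    · exact ⟨⟨0, by simp⟩, fun ω hω h => absurd ⟨ω, hω, h⟩ hv⟩
  choose c hc using hex
  exact ⟨c, fun ω hω => mem_iUnion.2
    ⟨fun i => ⟨_, floor_mem_Icc_of_holder hb hb1 hC hn hω (gridPt n i)⟩,
      hc _ ω hω fun _ => rfl⟩⟩

lemma tendsto_card_mul_exp {c β : ℝ} (hc : 0 < c) (hβ : 1 < β) :
    Tendsto (fun n : ℕ => ((2 * n + 1 : ℕ) : ℝ) ^ (n + 1) * Real.exp (-(c * (n : ℝ) ^ β)))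
      atTop (𝓝 0) := by
  obtain ⟨s, hs1, hs2⟩ := exists_between hβ
  have hs : 0 < s - 1 := by linarith
  set D : ℝ := 3 ^ s / (s - 1) with hD
  have hD0 : 0 < D := by positivity
  have hcmp : ∀ᶠ n : ℕ in atTop, D * (n : ℝ) ^ s ≤ c / 2 * (n : ℝ) ^ β := by
    have h1 : Tendsto (fun n : ℕ => (n : ℝ) ^ (β - s)) atTop atTop :=
      (tendsto_rpow_atTop (by linarith)).comp tendsto_natCast_atTop_atTop
    filter_upwards [h1.eventually_ge_atTop (D / (c / 2)), eventually_gt_atTop 0] with n hn hn0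
    have hn' : (0 : ℝ) < n := by exact_mod_cast hn0
    rw [div_le_iff₀ (by positivity)] at hn
    calc D * (n : ℝ) ^ s ≤ (n : ℝ) ^ (β - s) * (c / 2) * (n : ℝ) ^ s := by gcongr
      _ = c / 2 * ((n : ℝ) ^ (β - s) * (n : ℝ) ^ s) := by ring
      _ = _ := by rw [← Real.rpow_add hn']; ring_nf
  have hlim : Tendsto (fun n : ℕ => Real.exp (-(c / 2 * (n : ℝ) ^ β))) atTop (𝓝 0) := by
    refine Real.tendsto_exp_neg_atTop_nhds_zero.comp ?_
    exact ((tendsto_rpow_atTop (by linarith)).comp tendsto_natCast_atTop_atTop).const_mul_atTop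
      (by positivity)
  refine squeeze_zero' (Eventually.of_forall fun n => by positivity) ?_ hlim
  filter_upwards [hcmp, eventually_gt_atTop 0] with n hn hn0
  have hn' : (1 : ℝ) ≤ n := by exact_mod_cast hn0
  have hlog : ((n + 1 : ℕ) : ℝ) * Real.log ((2 * n + 1 : ℕ) : ℝ) ≤ D * (n : ℝ) ^ s := by
    have h1 : Real.log ((2 * n + 1 : ℕ) : ℝ) ≤ (3 * n : ℝ) ^ (s - 1) / (s - 1) := by
      refine (Real.log_le_rpow_div (by positivity) hs).trans ?_
      gcongr
      push_cast
      linarith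
    calc ((n + 1 : ℕ) : ℝ) * Real.log ((2 * n + 1 : ℕ) : ℝ)
        ≤ (3 * n) * ((3 * n : ℝ) ^ (s - 1) / (s - 1)) := by
          gcongr
          push_cast
          linarith
      _ = (3 * n : ℝ) ^ s / (s - 1) := by
          rw [mul_div_assoc', mul_comm, ← Real.rpow_add_one (by positivity), sub_add_cancel]
      _ = _ := by
          rw [Real.mul_rpow (by norm_num) (by positivity), hD]
          ring
  rw [← Real.exp_log (show (0 : ℝ) < ((2 * n + 1 : ℕ) : ℝ) ^ (n + 1) by positivity), Real.log_pow,
    ← Real.exp_add]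
  gcongr
  linarith

lemma hMeas_holderSet_lt_top {b α : ℝ} (hb : 0 < b) (hb1 : b ≤ 1) (hbα : 1 < b * α) :
    hMeas (fun ε : ℝ => Real.exp (-(ε ^ (-α)))) (holderSet b) < ∞ := by
  refine lt_of_le_of_lt (iSup₂_le fun δ hδ => ?_) ENNReal.one_lt_top
  obtain ⟨κ, hκ, hκ1⟩ := ENNReal.exists_pos_sum_of_countable' (one_ne_zero (α := ℝ≥0∞)) ℕ
  have hex : ∀ m : ℕ, ∃ n : ℕ, 0 < n ∧
      ENNReal.ofReal (4 * ((m + 1 : ℝ) * (n : ℝ) ^ (-b))) ≤ δ ∧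
      ENNReal.ofReal (((2 * n + 1 : ℕ) : ℝ) ^ (n + 1) *
        Real.exp (-((4 * ((m + 1 : ℝ) * (n : ℝ) ^ (-b))) ^ (-α)))) ≤ κ m := by
    intro m
    have h1 : Tendsto (fun n : ℕ => ENNReal.ofReal (4 * ((m + 1 : ℝ) * (n : ℝ) ^ (-b)))) atTop
        (𝓝 (ENNReal.ofReal (4 * ((m + 1) * 0)))) :=
      ENNReal.tendsto_ofReal ((((tendsto_rpow_neg_atTop hb).comp
        tendsto_natCast_atTop_atTop).const_mul _).const_mul _)
    rw [mul_zero, mul_zero, ENNReal.ofReal_zero] at h1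
    have h2 := ENNReal.tendsto_ofReal (tendsto_card_mul_exp
      (show 0 < (4 * (m + 1 : ℝ)) ^ (-α) by positivity) hbα)
    rw [ENNReal.ofReal_zero] at h2
    obtain ⟨n, hn, hn1, hn2⟩ := ((eventually_gt_atTop 0).and ((h1.eventually_le_const hδ).and
      (h2.eventually_le_const (hκ m)))).exists
    refine ⟨n, hn, hn1, ?_⟩
    have e : (4 * ((m + 1 : ℝ) * (n : ℝ) ^ (-b))) ^ (-α) =
        (4 * (m + 1 : ℝ)) ^ (-α) * (n : ℝ) ^ (b * α) := by
      rw [← mul_assoc, Real.mul_rpow (by positivity) (by positivity), ← Real.rpow_mul (by positivity)]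
      ring_nf
    rw [e]
    exact hn2
  choose n hn hnδ hnκ using hex
  choose c hc using fun m : ℕ =>
    exists_cover_holderBall hb hb1 (show (0 : ℝ) < m + 1 by positivity) (hn m)
  have : ∀ m, Nonempty (Fin (n m + 1) → Finset.Icc (-(n m : ℤ)) (n m)) := fun m =>
    ⟨fun _ => ⟨0, by simp⟩⟩
  refine (hMeasAux_le_of_finite_covers _
    (fun m => Fin (n m + 1) → Finset.Icc (-(n m : ℤ)) (n m)) c
    (fun m => 4 * ((m + 1 : ℝ) * (n m : ℝ) ^ (-b))) (fun m => ⟨?_, hnδ m⟩) ?_).trans ?_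
  · have : (0 : ℝ) < n m := by exact_mod_cast hn m
    positivity
  · rintro ω ⟨C, hC⟩
    obtain ⟨m, hm⟩ := exists_nat_ge C
    refine mem_iUnion.2 ⟨m, hc m fun x y => (hC x y).trans ?_⟩
    gcongr
    linarith
  · refine le_trans (ENNReal.tsum_le_tsum fun m => ?_) hκ1.le
    refine le_trans (le_of_eq ?_) (hnκ m)
    have hcard : Fintype.card (Fin (n m + 1) → Finset.Icc (-(n m : ℤ)) (n m)) =
        (2 * n m + 1) ^ (n m + 1) := by
      rw [Fintype.card_fun, Fintype.card_coe, Int.card_Icc, Fintype.card_fin]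
      congr 1
      omega
    rw [hcard, ENNReal.ofReal_mul (by positivity), ENNReal.ofReal_pow (by positivity),
      ENNReal.ofReal_natCast, Nat.cast_pow]

lemma ordH_le_of_subset_holderMinus {q : ℝ} (hq : 0 < q) (hq1 : q ≤ 1) {A : Set PathSpace}
    (hA : A ⊆ holderMinus q) : ordH A ≤ ENNReal.ofReal (1 / q) := by
  refine iSup₂_le fun α hα => ENNReal.ofReal_le_ofReal ?_
  by_contra! hlt
  have h1 : 1 / α < q := by
    rw [div_lt_iff₀ hα.1]
    rw [div_lt_iff₀ hq] at hlt
    linarith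
  obtain ⟨b, hb, hbq⟩ := exists_between h1
  have hb0 : 0 < b := (one_div_pos.2 hα.1).trans hb
  rw [div_lt_iff₀ hα.1] at hb
  have hsub : A ⊆ holderSet b := fun ω hω => mem_iInter₂.1 (hA hω) b ⟨hb0, hbq⟩
  refine absurd hα.2 (ne_of_lt ((hMeas_mono _ hsub).trans_lt
    (hMeas_holderSet_lt_top hb0 (hbq.le.trans hq1) hb)))

lemma levelOrd_inter_pathCrit_subset {W : Measure PathSpace} (hW : IsWienerMeasure W) {q : ℝ}
    (hq : 0 < q) (hq1 : q < 1) : levelOrd W (2 / q - 2) ∩ pathCrit ⊆ holderMinus q := by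
  have hξ : 0 < 2 / q - 2 := by
    rw [sub_pos, lt_div_iff₀ hq]
    linarith
  rintro ω ⟨hω, hcrit⟩
  obtain ⟨q', hq', hmem⟩ := mem_iUnion₂.1 hcrit
  have hle : q ≤ q' := by
    by_contra! hlt
    have h1 : 2 / q - 2 < 2 / q' - 2 := by
      have := div_lt_div_of_pos_left two_pos hq'.1 hlt
      linarith
    obtain ⟨η, h2, h3⟩ := exists_between h1
    exact absurd (le_of_mem_levelOrd hξ hω
      (wiener_ball_le_of_holderCrit hW hq'.1 hmem (hξ.trans h2) h3)) (not_le.2 h2)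
  exact mem_iInter₂.2 fun b hb => mem_iInter₂.1 hmem.1 b ⟨hb.1, hb.2.trans_le hle⟩

end

/-- **Multifractal spectrum of the Wiener measure.** For `ξ ≥ 2` the level set
`E^crit(ξ) = E(ξ) ∩ Ω^crit` is non-empty with Hausdorff order `1 + ξ/2`, and
consequently `ord_H E(ξ) ≥ 1 + ξ/2`; for `0 < ξ < 2` the level set `E(ξ)` is
empty. -/
theorem wiener_multifractal_spectrum (W : Measure PathSpace) (hW : IsWienerMeasure W) :
    (∀ ξ : ℝ, 2 ≤ ξ →
      (levelOrd W ξ ∩ pathCrit).Nonempty ∧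
      ordH (levelOrd W ξ ∩ pathCrit) = ENNReal.ofReal (1 + ξ / 2) ∧
      ENNReal.ofReal (1 + ξ / 2) ≤ ordH (levelOrd W ξ)) ∧
    (∀ ξ : ℝ, 0 < ξ → ξ < 2 → levelOrd W ξ = ∅) := by
  refine ⟨fun ξ hξ => ?_, fun ξ h0 h2 => levelOrd_eq_empty hW h0 h2⟩
  obtain ⟨q, hqdef⟩ : ∃ q : ℝ, q = 2 / (2 + ξ) := ⟨_, rfl⟩
  have hq : 0 < q := by rw [hqdef]; positivity
  have hq2 : q ≤ 1 / 2 := by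
    rw [hqdef, div_le_div_iff₀ (by linarith) two_pos]
    linarith
  have hξq : ξ = 2 / q - 2 := by
    rw [hqdef]
    field_simp
    ring
  have h1q : 1 + ξ / 2 = 1 / q := by
    rw [hξq]
    ring
  have hsub : range (critPath hq) ⊆ levelOrd W ξ ∩ pathCrit := by
    rintro _ ⟨s, rfl⟩
    refine ⟨hξq ▸ critPath_mem_levelOrd hW hq hq2 s, mem_iUnion₂.2 ⟨q, ⟨hq, by linarith⟩, ?_⟩⟩
    exact critPath_mem_holderCrit hq (by linarith) s
  have hge := le_ordH_of_range_critPath_subset hq hsub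
  rw [h1q]
  refine ⟨(range_nonempty _).mono hsub, le_antisymm ?_ hge, hge.trans (ordH_mono inter_subset_left)⟩
  refine ordH_le_of_subset_holderMinus hq (by linarith) ?_
  rw [hξq]
  exact levelOrd_inter_pathCrit_subset hW hq (by linarith)

end Multifractal
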